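/- arXiv:2007.10968 — 5 statements merged into one kernel-verified Lean document; each statement's English description precedes it below -/
import Mathlib

section
/- Twisted exterior derivative identity (Proposition 3.4(e), trivialized flat version): if (u, A) is a smooth solution of the YMH equations on U, then pointwise on U one has D₁σ₊ − i·D₂σ₊ = (F − h)·u, where D_jσ₊ = ∂_jσ₊ − iA_jσ₊. -/
open MeasureTheory Complex

noncomputable section

/-- Partial derivative in the first coordinate direction. -/
def pd1 {E : Type*} [NormedAddCommGroup E] [NormedSpace ℝ E] (f : ℝ × ℝ → E) (x : ℝ × ℝ) : E :=
  fderiv ℝ f x (1, 0)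

/-- Partial derivative in the second coordinate direction. -/
def pd2 {E : Type*} [NormedAddCommGroup E] [NormedSpace ℝ E] (f : ℝ × ℝ → E) (x : ℝ × ℝ) : E :=
  fderiv ℝ f x (0, 1)

/-- First covariant derivative `D₁f = ∂₁f − iA₁f`. -/
def D1 (A1 : ℝ × ℝ → ℝ) (f : ℝ × ℝ → ℂ) (x : ℝ × ℝ) : ℂ :=
  pd1 f x - Complex.I * (A1 x) * f x

/-- Second covariant derivative `D₂f = ∂₂f − iA₂f`. -/
def D2 (A2 : ℝ × ℝ → ℝ) (f : ℝ × ℝ → ℂ) (x : ℝ × ℝ) : ℂ :=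
  pd2 f x - Complex.I * (A2 x) * f x

/-- Curvature function `F = ∂₁A₂ − ∂₂A₁`. -/
def curv (A1 A2 : ℝ × ℝ → ℝ) (x : ℝ × ℝ) : ℝ := pd1 A2 x - pd2 A1 x

/-- `h = (1 − |u|²)/(2ε²)`. -/
def hfun (ε : ℝ) (u : ℝ × ℝ → ℂ) (x : ℝ × ℝ) : ℝ := (1 - ‖u x‖ ^ 2) / (2 * ε ^ 2)

/-- `σ₊ = D₁u + iD₂u`. -/
def sigP (u : ℝ × ℝ → ℂ) (A1 A2 : ℝ × ℝ → ℝ) (x : ℝ × ℝ) : ℂ :=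
  D1 A1 u x + Complex.I * D2 A2 u x

/-- `σ₋ = D₁u − iD₂u`. -/
def sigM (u : ℝ × ℝ → ℂ) (A1 A2 : ℝ × ℝ → ℝ) (x : ℝ × ℝ) : ℂ :=
  D1 A1 u x - Complex.I * D2 A2 u x

/-- The Yang--Mills--Higgs energy over the fundamental domain `[0,1]²`. -/
def energy (ε : ℝ) (u : ℝ × ℝ → ℂ) (A1 A2 : ℝ × ℝ → ℝ) : ℝ :=
  ∫ x in Set.Icc (0:ℝ) 1 ×ˢ Set.Icc (0:ℝ) 1,
    (ε ^ 2 * curv A1 A2 x ^ 2 + ‖D1 A1 u x‖ ^ 2 + ‖D2 A2 u x‖ ^ 2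
      + (1 - ‖u x‖ ^ 2) ^ 2 / (4 * ε ^ 2))

/-- `ℤ²`-periodicity. -/
def Periodic2 {E : Type*} (f : ℝ × ℝ → E) : Prop :=
  ∀ x : ℝ × ℝ, f (x.1 + 1, x.2) = f x ∧ f (x.1, x.2 + 1) = f x

/-- The Yang--Mills--Higgs equations on all of `ℝ²`. -/
def IsYMH (ε : ℝ) (u : ℝ × ℝ → ℂ) (A1 A2 : ℝ × ℝ → ℝ) : Prop :=
  (∀ x, -(D1 A1 (D1 A1 u) x + D2 A2 (D2 A2 u) x) = (hfun ε u x : ℂ) * u x) ∧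
  (∀ x, ε ^ 2 * pd2 (curv A1 A2) x = ((starRingEnd ℂ) (u x) * D1 A1 u x).im) ∧
  (∀ x, ε ^ 2 * pd1 (curv A1 A2) x = -((starRingEnd ℂ) (u x) * D2 A2 u x).im)

/-- The Yang--Mills--Higgs equations on an open set `U ⊆ ℝ²`. -/
def IsYMHOn (ε : ℝ) (u : ℝ × ℝ → ℂ) (A1 A2 : ℝ × ℝ → ℝ) (U : Set (ℝ × ℝ)) : Prop :=
  (∀ x ∈ U, -(D1 A1 (D1 A1 u) x + D2 A2 (D2 A2 u) x) = (hfun ε u x : ℂ) * u x) ∧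
  (∀ x ∈ U, ε ^ 2 * pd2 (curv A1 A2) x = ((starRingEnd ℂ) (u x) * D1 A1 u x).im) ∧
  (∀ x ∈ U, ε ^ 2 * pd1 (curv A1 A2) x = -((starRingEnd ℂ) (u x) * D2 A2 u x).im)

/-- Stability: nonnegative second variation of the energy along all smooth periodic
variations of the section and the connection. -/
def Stable (ε : ℝ) (u : ℝ × ℝ → ℂ) (A1 A2 : ℝ × ℝ → ℝ) : Prop :=
  ∀ v : ℝ × ℝ → ℂ, ∀ a1 a2 : ℝ × ℝ → ℝ,
    ContDiff ℝ (⊤ : ℕ∞) v → Periodic2 v → ContDiff ℝ (⊤ : ℕ∞) a1 → Periodic2 a1 →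
    ContDiff ℝ (⊤ : ℕ∞) a2 → Periodic2 a2 →
    0 ≤ iteratedDeriv 2 (fun t : ℝ =>
      energy ε (fun x => u x + t • v x)
        (fun x => A1 x + t * a1 x) (fun x => A2 x + t * a2 x)) 0

theorem aux_pd_diff {E : Type*} [NormedAddCommGroup E] [NormedSpace ℝ E] {f : ℝ × ℝ → E}
    {x : ℝ × ℝ} (hf : ContDiffAt ℝ 2 f x) : DifferentiableAt ℝ (fderiv ℝ f) x :=
  (hf.fderiv_right (m := 1) (by norm_num)).differentiableAt (by norm_num)

theorem aux_symm {f : ℝ × ℝ → ℂ} {x : ℝ × ℝ} (hf : ContDiffAt ℝ 2 f x) :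
    pd1 (pd2 f) x = pd2 (pd1 f) x := by
  have hd := aux_pd_diff hf
  have hs : IsSymmSndFDerivAt ℝ f x := hf.isSymmSndFDerivAt (by simp)
  have e : ∀ v w : ℝ × ℝ,
      fderiv ℝ (fun y => fderiv ℝ f y v) x w = fderiv ℝ (fderiv ℝ f) x w v := by
    intro v w
    have := (hd.hasFDerivAt.clm_apply (hasFDerivAt_const v x)).fderiv
    rw [this]; simp
  change fderiv ℝ (fun y => fderiv ℝ f y (0, 1)) x (1, 0)
    = fderiv ℝ (fun y => fderiv ℝ f y (1, 0)) x (0, 1)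
  rw [e, e]
  exact hs _ _

theorem aux_hasFDeriv {g f : ℝ × ℝ → ℂ} {a : ℝ × ℝ → ℝ} {x : ℝ × ℝ}
    (hg : DifferentiableAt ℝ g x) (hf : DifferentiableAt ℝ f x) (ha : DifferentiableAt ℝ a x) :
    DifferentiableAt ℝ (fun y => g y - Complex.I * (a y) * f y) x ∧ ∀ v,
      fderiv ℝ (fun y => g y - Complex.I * (a y) * f y) x v =
        fderiv ℝ g x v - Complex.I * (((fderiv ℝ a x v : ℝ) : ℂ) * f x + a x * fderiv ℝ f x v) := by
  have h1 : HasFDerivAt (fun y => ((a y : ℝ) : ℂ)) (Complex.ofRealCLM.comp (fderiv ℝ a x)) x :=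
    Complex.ofRealCLM.hasFDerivAt.comp x ha.hasFDerivAt
  have h2 := hg.hasFDerivAt.sub ((h1.const_mul Complex.I).mul hf.hasFDerivAt)
  refine ⟨h2.differentiableAt, fun v => ?_⟩
  have h3 := congrArg (fun L => L v) h2.fderiv
  refine Eq.trans h3 ?_
  simp
  ring

theorem aux_sig {p q : ℝ × ℝ → ℂ} {x : ℝ × ℝ}
    (hp : DifferentiableAt ℝ p x) (hq : DifferentiableAt ℝ q x) (v : ℝ × ℝ) :
    fderiv ℝ (fun y => p y + Complex.I * q y) x v
      = fderiv ℝ p x v + Complex.I * fderiv ℝ q x v := by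
  have h2 := hp.hasFDerivAt.add (hq.hasFDerivAt.const_mul Complex.I)
  have h3 := congrArg (fun L => L v) h2.fderiv
  refine Eq.trans h3 ?_
  simp

/-- Twisted exterior derivative identity (Proposition 3.4(e), trivialized flat version). -/
theorem twisted_exterior_derivative_identity
    (ε : ℝ) (hε : 0 < ε) (U : Set (ℝ × ℝ)) (hU : IsOpen U)
    (u : ℝ × ℝ → ℂ) (A1 A2 : ℝ × ℝ → ℝ)
    (hu : ContDiffOn ℝ (⊤ : ℕ∞) u U) (hA1 : ContDiffOn ℝ (⊤ : ℕ∞) A1 U) (hA2 : ContDiffOn ℝ (⊤ : ℕ∞) A2 U)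
    (hYMH : IsYMHOn ε u A1 A2 U) :
    ∀ x ∈ U,
      D1 A1 (sigP u A1 A2) x - Complex.I * D2 A2 (sigP u A1 A2) x =
        ((curv A1 A2 x - hfun ε u x : ℝ) : ℂ) * u x := by
  intro x hx
  have hn := hU.mem_nhds hx
  have hu2 : ContDiffAt ℝ 2 u x := (hu.contDiffAt hn).of_le (WithTop.coe_le_coe.2 (le_top : (2 : ℕ∞) ≤ ⊤))
  have ha1 : DifferentiableAt ℝ A1 x := (hA1.contDiffAt hn).differentiableAt (by simp)
  have ha2 : DifferentiableAt ℝ A2 x := (hA2.contDiffAt hn).differentiableAt (by simp)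
  have hud : DifferentiableAt ℝ u x := hu2.differentiableAt (by norm_num)
  have hd := aux_pd_diff hu2
  have hp1 : DifferentiableAt ℝ (pd1 u) x := hd.clm_apply (differentiableAt_const _)
  have hp2 : DifferentiableAt ℝ (pd2 u) x := hd.clm_apply (differentiableAt_const _)
  obtain ⟨d1, e1⟩ := aux_hasFDeriv hp1 hud ha1
  obtain ⟨d2, e2⟩ := aux_hasFDeriv hp2 hud ha2
  have hs := aux_symm hu2
  have hY := hYMH.1 x hx
  change DifferentiableAt ℝ (D1 A1 u) x at d1
  change DifferentiableAt ℝ (D2 A2 u) x at d2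
  have s1 : pd1 (sigP u A1 A2) x = pd1 (D1 A1 u) x + Complex.I * pd1 (D2 A2 u) x :=
    aux_sig d1 d2 _
  have s2 : pd2 (sigP u A1 A2) x = pd2 (D1 A1 u) x + Complex.I * pd2 (D2 A2 u) x :=
    aux_sig d1 d2 _
  have c1 : pd2 (D1 A1 u) x = pd2 (pd1 u) x
      - Complex.I * (((pd2 A1 x : ℝ) : ℂ) * u x + A1 x * pd2 u x) := e1 _
  have c2 : pd1 (D2 A2 u) x = pd1 (pd2 u) x
      - Complex.I * (((pd1 A2 x : ℝ) : ℂ) * u x + A2 x * pd1 u x) := e2 _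
  have k1 : ∀ f, D1 A1 f x = pd1 f x - Complex.I * (A1 x) * f x := fun _ => rfl
  have k2 : ∀ f, D2 A2 f x = pd2 f x - Complex.I * (A2 x) * f x := fun _ => rfl
  have hI := Complex.I_mul_I
  have comm : D1 A1 (D2 A2 u) x - D2 A2 (D1 A1 u) x
      = -Complex.I * ((curv A1 A2 x : ℝ) : ℂ) * u x := by
    simp only [k1, k2, c1, c2, hs, curv]
    push_cast
    ring
  have t1 : D1 A1 (sigP u A1 A2) x = D1 A1 (D1 A1 u) x + Complex.I * D1 A1 (D2 A2 u) x := by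
    simp only [k1, k2, s1, sigP]; ring
  have t2 : D2 A2 (sigP u A1 A2) x = D2 A2 (D1 A1 u) x + Complex.I * D2 A2 (D2 A2 u) x := by
    simp only [k1, k2, s2, sigP]; ring
  rw [t1, t2]
  push_cast
  linear_combination -hY + Complex.I * comm
    - (D2 A2 (D2 A2 u) x + ((curv A1 A2 x : ℝ) : ℂ) * u x) * hI
end
end

section
/- Key differential inequalities: if (u, A) is a smooth solution of the YMH equations on U, then pointwise on U one has −(∂₁² + ∂₂²)(F − h) + (|u|²/ε²)·(F − h) ≤ 0 and −(∂₁² + ∂₂²)(−F − h) + (|u|²/ε²)·(−F − h) ≤ 0. -/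
open MeasureTheory Complex

noncomputable section

lemma aux_conj_mul (f g : ℝ × ℝ → ℂ) (a : ℝ) (v x : ℝ × ℝ)
    (hf : DifferentiableAt ℝ f x) (hg : DifferentiableAt ℝ g x) :
    HasFDerivAt (fun y => (starRingEnd ℂ) (f y) * g y)
      (fderiv ℝ (fun y => (starRingEnd ℂ) (f y) * g y) x) x ∧
    fderiv ℝ (fun y => (starRingEnd ℂ) (f y) * g y) x v =
      (starRingEnd ℂ) (fderiv ℝ f x v - Complex.I * a * f x) * g x
        + (starRingEnd ℂ) (f x) * (fderiv ℝ g x v - Complex.I * a * g x) := by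
  have h1 : HasFDerivAt (fun y => (starRingEnd ℂ) (f y))
      ((Complex.conjCLE : ℂ →L[ℝ] ℂ).comp (fderiv ℝ f x)) x :=
    (Complex.conjCLE : ℂ →L[ℝ] ℂ).hasFDerivAt.comp x hf.hasFDerivAt
  have h2 := h1.mul hg.hasFDerivAt
  refine ⟨h2.differentiableAt.hasFDerivAt, ?_⟩
  have h3 : fderiv ℝ (fun y => (starRingEnd ℂ) (f y) * g y) x = _ := h2.fderiv
  rw [h3]
  simp
  ring

lemma aux_re (f g : ℝ × ℝ → ℂ) (a : ℝ) (v x : ℝ × ℝ)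
    (hf : DifferentiableAt ℝ f x) (hg : DifferentiableAt ℝ g x) :
    fderiv ℝ (fun y => ((starRingEnd ℂ) (f y) * g y).re) x v =
      ((starRingEnd ℂ) (fderiv ℝ f x v - Complex.I * a * f x) * g x
        + (starRingEnd ℂ) (f x) * (fderiv ℝ g x v - Complex.I * a * g x)).re := by
  obtain ⟨h1, h2⟩ := aux_conj_mul f g a v x hf hg
  have h3 : HasFDerivAt (fun y => ((starRingEnd ℂ) (f y) * g y).re) _ x :=
    Complex.reCLM.hasFDerivAt.comp x h1
  rw [h3.fderiv, ← h2]
  rfl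

lemma aux_im (f g : ℝ × ℝ → ℂ) (a : ℝ) (v x : ℝ × ℝ)
    (hf : DifferentiableAt ℝ f x) (hg : DifferentiableAt ℝ g x) :
    fderiv ℝ (fun y => ((starRingEnd ℂ) (f y) * g y).im) x v =
      ((starRingEnd ℂ) (fderiv ℝ f x v - Complex.I * a * f x) * g x
        + (starRingEnd ℂ) (f x) * (fderiv ℝ g x v - Complex.I * a * g x)).im := by
  obtain ⟨h1, h2⟩ := aux_conj_mul f g a v x hf hg
  have h3 : HasFDerivAt (fun y => ((starRingEnd ℂ) (f y) * g y).im) _ x :=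
    Complex.imCLM.hasFDerivAt.comp x h1
  rw [h3.fderiv, ← h2]
  rfl

lemma aux_smooth {E : Type*} [NormedAddCommGroup E] [NormedSpace ℝ E] {f : ℝ × ℝ → E}
    {x : ℝ × ℝ} (v : ℝ × ℝ) (hf : ContDiffAt ℝ (⊤ : ℕ∞) f x) :
    ContDiffAt ℝ (⊤ : ℕ∞) (fun y => fderiv ℝ f y v) x :=
  (hf.fderiv_right (m := (⊤ : ℕ∞)) (by simp)).clm_apply contDiffAt_const

lemma aux_cov_smooth {f : ℝ × ℝ → ℂ} {A : ℝ × ℝ → ℝ} {x : ℝ × ℝ} (v : ℝ × ℝ)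
    (hf : ContDiffAt ℝ (⊤ : ℕ∞) f x) (hA : ContDiffAt ℝ (⊤ : ℕ∞) A x) :
    ContDiffAt ℝ (⊤ : ℕ∞) (fun y => fderiv ℝ f y v - Complex.I * (A y) * f y) x := by
  have hA' : ContDiffAt ℝ (⊤ : ℕ∞) (fun y => (A y : ℂ)) x :=
    Complex.ofRealCLM.contDiff.contDiffAt.comp x hA
  exact (aux_smooth v hf).sub ((contDiffAt_const.mul hA').mul hf)

lemma aux_cov_deriv {f : ℝ × ℝ → ℂ} {A : ℝ × ℝ → ℝ} {x : ℝ × ℝ} (v w : ℝ × ℝ)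
    (hf : ContDiffAt ℝ (⊤ : ℕ∞) f x) (hA : ContDiffAt ℝ (⊤ : ℕ∞) A x) :
    fderiv ℝ (fun y => fderiv ℝ f y v - Complex.I * (A y) * f y) x w =
      fderiv ℝ (fderiv ℝ f) x w v - Complex.I * (fderiv ℝ A x w : ℝ) * f x
        - Complex.I * A x * fderiv ℝ f x w := by
  have hne : ((⊤ : ℕ∞) : WithTop ℕ∞) ≠ 0 := by simp
  have h1 : HasFDerivAt (fun y => (A y : ℂ)) (Complex.ofRealCLM.comp (fderiv ℝ A x)) x :=
    Complex.ofRealCLM.hasFDerivAt.comp x (hA.differentiableAt hne).hasFDerivAt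
  have h2 : HasFDerivAt (fderiv ℝ f) (fderiv ℝ (fderiv ℝ f) x) x :=
    ((hf.fderiv_right (m := (⊤ : ℕ∞)) (by simp)).differentiableAt hne).hasFDerivAt
  have h3 := (h2.clm_apply (hasFDerivAt_const v x)).sub
    ((h1.const_mul Complex.I).mul (hf.differentiableAt hne).hasFDerivAt)
  have h4 : fderiv ℝ (fun y => fderiv ℝ f y v - Complex.I * (A y) * f y) x = _ := h3.fderiv
  rw [h4]
  simp
  ring

lemma aux_comm {f : ℝ × ℝ → ℂ} {A1 A2 : ℝ × ℝ → ℝ} {x : ℝ × ℝ}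
    (hf : ContDiffAt ℝ (⊤ : ℕ∞) f x) (hA1 : ContDiffAt ℝ (⊤ : ℕ∞) A1 x)
    (hA2 : ContDiffAt ℝ (⊤ : ℕ∞) A2 x) :
    D2 A2 (D1 A1 f) x - D1 A1 (D2 A2 f) x = Complex.I * (curv A1 A2 x : ℝ) * f x := by
  have hs := (hf.isSymmSndFDerivAt (by simp; exact WithTop.coe_le_coe.2 (le_top : (2 : ℕ∞) ≤ ⊤))).eq (1, 0) (0, 1)
  have e1 := aux_cov_deriv (1, 0) (0, 1) hf hA1
  have e2 := aux_cov_deriv (0, 1) (1, 0) hf hA2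
  have e1' : pd2 (D1 A1 f) x = _ := e1
  have e2' : pd1 (D2 A2 f) x = _ := e2
  have d : ∀ y, D1 A1 f y = fderiv ℝ f y (1, 0) - Complex.I * A1 y * f y := fun _ => rfl
  have d' : ∀ y, D2 A2 f y = fderiv ℝ f y (0, 1) - Complex.I * A2 y * f y := fun _ => rfl
  have q1 : D2 A2 (D1 A1 f) x = pd2 (D1 A1 f) x - Complex.I * A2 x * D1 A1 f x := rfl
  have q2 : D1 A1 (D2 A2 f) x = pd1 (D2 A2 f) x - Complex.I * A1 x * D2 A2 f x := rfl
  rw [q1, q2, e1', e2', d, d', hs, curv, pd1, pd2]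
  push_cast
  ring

lemma aux_lin {F h : ℝ × ℝ → ℝ} {x : ℝ × ℝ} (c : ℝ) (v : ℝ × ℝ)
    (hF : ContDiffAt ℝ (⊤ : ℕ∞) F x) (hh : ContDiffAt ℝ (⊤ : ℕ∞) h x) :
    fderiv ℝ (fun y => c * F y - h y) x v = c * fderiv ℝ F x v - fderiv ℝ h x v := by
  have hne : ((⊤ : ℕ∞) : WithTop ℕ∞) ≠ 0 := by simp
  have h3 := ((hF.differentiableAt hne).hasFDerivAt.const_mul c).sub
    (hh.differentiableAt hne).hasFDerivAt
  have h4 : fderiv ℝ (fun y => c * F y - h y) x = _ := h3.fderiv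
  rw [h4]
  simp

lemma aux_lin2 {F h : ℝ × ℝ → ℝ} {U : Set (ℝ × ℝ)} (hU : IsOpen U) (c : ℝ) (v : ℝ × ℝ)
    (hF : ∀ x ∈ U, ContDiffAt ℝ (⊤ : ℕ∞) F x) (hh : ∀ x ∈ U, ContDiffAt ℝ (⊤ : ℕ∞) h x)
    (x : ℝ × ℝ) (hx : x ∈ U) :
    fderiv ℝ (fun z => fderiv ℝ (fun y => c * F y - h y) z v) x v
      = c * fderiv ℝ (fun z => fderiv ℝ F z v) x v - fderiv ℝ (fun z => fderiv ℝ h z v) x v := by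
  have he : (fun z => fderiv ℝ (fun y => c * F y - h y) z v)
      =ᶠ[nhds x] fun z => c * fderiv ℝ F z v - fderiv ℝ h z v := by
    filter_upwards [hU.mem_nhds hx] with z hz
    exact aux_lin c v (hF z hz) (hh z hz)
  rw [he.fderiv_eq]
  exact aux_lin c v (aux_smooth v (hF x hx)) (aux_smooth v (hh x hx))

lemma aux_hfun (ε : ℝ) (u : ℝ × ℝ → ℂ) :
    hfun ε u = fun y => (1 - ((starRingEnd ℂ) (u y) * u y).re) / (2 * ε ^ 2) := by
  funext y
  rw [hfun, ← Complex.normSq_eq_conj_mul_self, Complex.ofReal_re, Complex.normSq_eq_norm_sq]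

lemma aux_re_smooth {f g : ℝ × ℝ → ℂ} {x : ℝ × ℝ}
    (hf : ContDiffAt ℝ (⊤ : ℕ∞) f x) (hg : ContDiffAt ℝ (⊤ : ℕ∞) g x) :
    ContDiffAt ℝ (⊤ : ℕ∞) (fun y => ((starRingEnd ℂ) (f y) * g y).re) x := by
  have hf' : ContDiffAt ℝ (⊤ : ℕ∞) (fun y => (starRingEnd ℂ) (f y)) x :=
    (Complex.conjCLE : ℂ →L[ℝ] ℂ).contDiff.contDiffAt.comp x hf
  exact Complex.reCLM.contDiff.contDiffAt.comp x (hf'.mul hg)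

lemma aux_hfun_smooth (ε : ℝ) {u : ℝ × ℝ → ℂ} {x : ℝ × ℝ}
    (hu : ContDiffAt ℝ (⊤ : ℕ∞) u x) : ContDiffAt ℝ (⊤ : ℕ∞) (hfun ε u) x := by
  rw [aux_hfun]
  exact (contDiffAt_const.sub (aux_re_smooth hu hu)).div_const _

lemma aux_hfun_deriv (ε : ℝ) {u : ℝ × ℝ → ℂ} {x : ℝ × ℝ} (a : ℝ) (v : ℝ × ℝ)
    (hu : ContDiffAt ℝ (⊤ : ℕ∞) u x) :
    fderiv ℝ (hfun ε u) x v =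
      (-1 / ε ^ 2) * ((starRingEnd ℂ) (u x) * (fderiv ℝ u x v - Complex.I * a * u x)).re := by
  have hne : ((⊤ : ℕ∞) : WithTop ℕ∞) ≠ 0 := by simp
  have hd := hu.differentiableAt hne
  have h1 := aux_re u u a v x hd hd
  have h2 := ((aux_re_smooth hu hu).differentiableAt hne).hasFDerivAt
  have h3 := (h2.const_sub 1).mul_const ((2 * ε ^ 2)⁻¹)
  have h4 : fderiv ℝ (hfun ε u) x = (2 * ε ^ 2)⁻¹ •
      -fderiv ℝ (fun y => ((starRingEnd ℂ) (u y) * u y).re) x := by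
    rw [aux_hfun]
    simp only [div_eq_mul_inv]
    exact h3.fderiv
  rw [h4]
  simp only [FunLike.coe_smul, Pi.smul_apply, FunLike.coe_neg, Pi.neg_apply, h1]
  generalize fderiv ℝ u x v - Complex.I * a * u x = w
  simp only [Complex.add_re, Complex.mul_re, Complex.conj_re, Complex.conj_im, smul_eq_mul,
    mul_inv]
  ring

lemma aux_hfun_deriv2 (ε : ℝ) {u : ℝ × ℝ → ℂ} {A : ℝ × ℝ → ℝ} {U : Set (ℝ × ℝ)}
    (hU : IsOpen U) (v : ℝ × ℝ)
    (hu : ∀ x ∈ U, ContDiffAt ℝ (⊤ : ℕ∞) u x) (hA : ∀ x ∈ U, ContDiffAt ℝ (⊤ : ℕ∞) A x)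
    (x : ℝ × ℝ) (hx : x ∈ U) (D : (ℝ × ℝ → ℂ) → ℝ × ℝ → ℂ)
    (hD : D = fun f y => fderiv ℝ f y v - Complex.I * A y * f y) :
    fderiv ℝ (fun z => fderiv ℝ (hfun ε u) z v) x v =
      (-1 / ε ^ 2) * ((starRingEnd ℂ) (D u x) * D u x + (starRingEnd ℂ) (u x) * D (D u) x).re := by
  have hne : ((⊤ : ℕ∞) : WithTop ℕ∞) ≠ 0 := by simp
  have he : (fun z => fderiv ℝ (hfun ε u) z v)
      =ᶠ[nhds x] fun z => (-1 / ε ^ 2) * ((starRingEnd ℂ) (u z) * D u z).re := by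
    filter_upwards [hU.mem_nhds hx] with z hz
    rw [aux_hfun_deriv ε (A z) v (hu z hz), hD]
  have hDu : ContDiffAt ℝ (⊤ : ℕ∞) (D u) x := by
    rw [hD]; exact aux_cov_smooth v (hu x hx) (hA x hx)
  have h1 := aux_re u (D u) (A x) v x ((hu x hx).differentiableAt hne) (hDu.differentiableAt hne)
  rw [he.fderiv_eq, fderiv_const_mul ((aux_re_smooth (hu x hx) hDu).differentiableAt hne)]
  simp only [FunLike.coe_smul, Pi.smul_apply, h1, smul_eq_mul]
  rw [hD]

lemma aux_F_deriv2 (ε : ℝ) (hε : 0 < ε) (s : ℝ) {u w : ℝ × ℝ → ℂ} {F : ℝ × ℝ → ℝ}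
    {U : Set (ℝ × ℝ)} (hU : IsOpen U) (a : ℝ) (v : ℝ × ℝ)
    (hF : ∀ x ∈ U, ContDiffAt ℝ (⊤ : ℕ∞) F x)
    (h : ∀ x ∈ U, ε ^ 2 * fderiv ℝ F x v = s * ((starRingEnd ℂ) (u x) * w x).im)
    (x : ℝ × ℝ) (hx : x ∈ U)
    (hu : DifferentiableAt ℝ u x) (hw : DifferentiableAt ℝ w x) :
    ε ^ 2 * fderiv ℝ (fun z => fderiv ℝ F z v) x v =
      s * ((starRingEnd ℂ) (fderiv ℝ u x v - Complex.I * a * u x) * w x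
        + (starRingEnd ℂ) (u x) * (fderiv ℝ w x v - Complex.I * a * w x)).im := by
  have hne : ((⊤ : ℕ∞) : WithTop ℕ∞) ≠ 0 := by simp
  have he : (fun z => ε ^ 2 * fderiv ℝ F z v)
      =ᶠ[nhds x] fun z => s * ((starRingEnd ℂ) (u z) * w z).im := by
    filter_upwards [hU.mem_nhds hx] with z hz
    exact h z hz
  have h1 := aux_im u w a v x hu hw
  have h2 := congrArg (fun L : ℝ × ℝ →L[ℝ] ℝ => L v) (he.fderiv_eq (𝕜 := ℝ))
  have hd : DifferentiableAt ℝ (fun y => ((starRingEnd ℂ) (u y) * w y).im) x :=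
    (Complex.imCLM.hasFDerivAt.comp x (aux_conj_mul u w a v x hu hw).1).differentiableAt
  rw [fderiv_const_mul ((aux_smooth v (hF x hx)).differentiableAt hne), fderiv_const_mul hd] at h2
  simpa only [FunLike.coe_smul, Pi.smul_apply, h1, smul_eq_mul] using h2

lemma aux_final (ε : ℝ) (hε : 0 < ε) (c F h L1 L2 M1 M2 : ℝ) (z a b a1 b1 b2 a2 : ℂ)
    (hc : c = 1 ∨ c = -1)
    (H : -(a1 + b2) = (h : ℂ) * z)
    (hcomm : a2 - b1 = Complex.I * (F : ℂ) * z)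
    (hM1 : M1 = (-1 / ε ^ 2) * ((starRingEnd ℂ) a * a + (starRingEnd ℂ) z * a1).re)
    (hM2 : M2 = (-1 / ε ^ 2) * ((starRingEnd ℂ) b * b + (starRingEnd ℂ) z * b2).re)
    (hL2 : ε ^ 2 * L2 = 1 * ((starRingEnd ℂ) b * a + (starRingEnd ℂ) z * a2).im)
    (hL1 : ε ^ 2 * L1 = (-1) * ((starRingEnd ℂ) a * b + (starRingEnd ℂ) z * b1).im) :
    -((c * L1 - M1) + (c * L2 - M2)) + ‖z‖ ^ 2 / ε ^ 2 * (c * F - h) ≤ 0 := by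
  have hz : ‖z‖ ^ 2 = z.re ^ 2 + z.im ^ 2 := by
    rw [← Complex.normSq_eq_norm_sq, Complex.normSq_apply]; ring
  have he : 0 < ε ^ 2 := by positivity
  have hL2' : L2 = ((starRingEnd ℂ) b * a + (starRingEnd ℂ) z * a2).im / ε ^ 2 := by
    rw [eq_div_iff he.ne']; linarith
  have hL1' : L1 = -((starRingEnd ℂ) a * b + (starRingEnd ℂ) z * b1).im / ε ^ 2 := by
    rw [eq_div_iff he.ne']; linarith
  have e1 : b2 = -a1 - (h : ℂ) * z := by linear_combination -H
  have e2 : a2 = b1 + Complex.I * (F : ℂ) * z := by linear_combination hcomm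
  have key : -((c * L1 - M1) + (c * L2 - M2)) + ‖z‖ ^ 2 / ε ^ 2 * (c * F - h)
      = -(a.re ^ 2 + a.im ^ 2 + b.re ^ 2 + b.im ^ 2 
          - 2 * c * (a.re * b.im - a.im * b.re)) / ε ^ 2 := by
    rw [hL1', hL2', hM1, hM2, hz, e1, e2]
    simp
    field_simp
    ring
  rw [key]
  apply div_nonpos_of_nonpos_of_nonneg _ he.le
  rcases hc with rfl | rfl
  · nlinarith [sq_nonneg (a.re - b.im), sq_nonneg (a.im + b.re)]
  · nlinarith [sq_nonneg (a.re + b.im), sq_nonneg (a.im - b.re)]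

lemma aux_main (c : ℝ) (hc : c = 1 ∨ c = -1)
    (ε : ℝ) (hε : 0 < ε) (U : Set (ℝ × ℝ)) (hU : IsOpen U)
    (u : ℝ × ℝ → ℂ) (A1 A2 : ℝ × ℝ → ℝ)
    (hu : ∀ x ∈ U, ContDiffAt ℝ (⊤ : ℕ∞) u x) (hA1 : ∀ x ∈ U, ContDiffAt ℝ (⊤ : ℕ∞) A1 x)
    (hA2 : ∀ x ∈ U, ContDiffAt ℝ (⊤ : ℕ∞) A2 x)
    (hYMH : IsYMHOn ε u A1 A2 U) (x : ℝ × ℝ) (hx : x ∈ U) :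
      (-(pd1 (pd1 (fun y => c * curv A1 A2 y - hfun ε u y)) x
          + pd2 (pd2 (fun y => c * curv A1 A2 y - hfun ε u y)) x)
        + ‖u x‖ ^ 2 / ε ^ 2 * (c * curv A1 A2 x - hfun ε u x) ≤ 0) := by
  have hne : ((⊤ : ℕ∞) : WithTop ℕ∞) ≠ 0 := by simp
  obtain ⟨E1, E2, E3⟩ := hYMH
  have hF : ∀ x ∈ U, ContDiffAt ℝ (⊤ : ℕ∞) (curv A1 A2) x := fun x hx =>
    (aux_smooth (1, 0) (hA2 x hx)).sub (aux_smooth (0, 1) (hA1 x hx))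
  have hh : ∀ x ∈ U, ContDiffAt ℝ (⊤ : ℕ∞) (hfun ε u) x := fun x hx =>
    aux_hfun_smooth ε (hu x hx)
  have l1 : pd1 (pd1 (fun y => c * curv A1 A2 y - hfun ε u y)) x = _ :=
    aux_lin2 hU c (1, 0) hF hh x hx
  have l2 : pd2 (pd2 (fun y => c * curv A1 A2 y - hfun ε u y)) x = _ :=
    aux_lin2 hU c (0, 1) hF hh x hx
  rw [l1, l2]
  have hud := (hu x hx).differentiableAt hne
  have hD1 : DifferentiableAt ℝ (D1 A1 u) x :=
    (aux_cov_smooth (1, 0) (hu x hx) (hA1 x hx)).differentiableAt hne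
  have hD2 : DifferentiableAt ℝ (D2 A2 u) x :=
    (aux_cov_smooth (0, 1) (hu x hx) (hA2 x hx)).differentiableAt hne
  exact aux_final ε hε c _ _ _ _ _ _ (u x) (D1 A1 u x) (D2 A2 u x) (D1 A1 (D1 A1 u) x)
    (D1 A1 (D2 A2 u) x) (D2 A2 (D2 A2 u) x) (D2 A2 (D1 A1 u) x) hc (E1 x hx)
    (aux_comm (hu x hx) (hA1 x hx) (hA2 x hx))
    (aux_hfun_deriv2 ε hU (1, 0) hu hA1 x hx (D1 A1) rfl)
    (aux_hfun_deriv2 ε hU (0, 1) hu hA2 x hx (D2 A2) rfl)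
    (aux_F_deriv2 ε hε 1 hU (A2 x) (0, 1) hF (fun y hy => by rw [one_mul]; exact E2 y hy)
      x hx hud hD1)
    (aux_F_deriv2 ε hε (-1) hU (A1 x) (1, 0) hF (fun y hy => by rw [neg_one_mul]; exact E3 y hy)
      x hx hud hD2)

/-- Key differential inequalities for `F − h` and `−F − h`. -/
theorem key_differential_inequalities
    (ε : ℝ) (hε : 0 < ε) (U : Set (ℝ × ℝ)) (hU : IsOpen U)
    (u : ℝ × ℝ → ℂ) (A1 A2 : ℝ × ℝ → ℝ)
    (hu : ContDiffOn ℝ (⊤ : ℕ∞) u U) (hA1 : ContDiffOn ℝ (⊤ : ℕ∞) A1 U) (hA2 : ContDiffOn ℝ (⊤ : ℕ∞) A2 U)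
    (hYMH : IsYMHOn ε u A1 A2 U) :
    ∀ x ∈ U,
      (-(pd1 (pd1 (fun y => curv A1 A2 y - hfun ε u y)) x
          + pd2 (pd2 (fun y => curv A1 A2 y - hfun ε u y)) x)
        + ‖u x‖ ^ 2 / ε ^ 2 * (curv A1 A2 x - hfun ε u x) ≤ 0) ∧
      (-(pd1 (pd1 (fun y => -curv A1 A2 y - hfun ε u y)) x
          + pd2 (pd2 (fun y => -curv A1 A2 y - hfun ε u y)) x)
        + ‖u x‖ ^ 2 / ε ^ 2 * (-curv A1 A2 x - hfun ε u x) ≤ 0) := by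
  intro x hx
  have h1 : ∀ x ∈ U, ContDiffAt ℝ (⊤ : ℕ∞) u x := fun x hx => hu.contDiffAt (hU.mem_nhds hx)
  have h2 : ∀ x ∈ U, ContDiffAt ℝ (⊤ : ℕ∞) A1 x := fun x hx => hA1.contDiffAt (hU.mem_nhds hx)
  have h3 : ∀ x ∈ U, ContDiffAt ℝ (⊤ : ℕ∞) A2 x := fun x hx => hA2.contDiffAt (hU.mem_nhds hx)
  have p := aux_main 1 (Or.inl rfl) ε hε U hU u A1 A2 h1 h2 h3 hYMH x hx
  have q := aux_main (-1) (Or.inr rfl) ε hε U hU u A1 A2 h1 h2 h3 hYMH x hx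
  simp only [one_mul] at p
  simp only [neg_one_mul] at q
  exact ⟨p, q⟩
end
end

section
/- Pointwise bound on the curvature (Proposition 3.5(a), flat torus case): let (u, A) be a periodic configuration solving the YMH equations with u not identically zero. Then −h(x) ≤ F(x) ≤ h(x) for all x ∈ ℝ². Moreover, if F(x₀) = h(x₀) at some point x₀ then F ≡ h on ℝ², and if F(x₀) = −h(x₀) at some point x₀ then F ≡ −h on ℝ². -/
open MeasureTheory Complex

noncomputable section

lemma pd1_smooth {E : Type*} [NormedAddCommGroup E] [NormedSpace ℝ E] {f : ℝ × ℝ → E}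
    (hf : ContDiff ℝ (⊤ : ℕ∞) f) : ContDiff ℝ (⊤ : ℕ∞) (pd1 f) := by
  unfold pd1
  exact (hf.fderiv_right (m := (⊤ : ℕ∞)) (by simp)).clm_apply contDiff_const

lemma pd2_smooth {E : Type*} [NormedAddCommGroup E] [NormedSpace ℝ E] {f : ℝ × ℝ → E}
    (hf : ContDiff ℝ (⊤ : ℕ∞) f) : ContDiff ℝ (⊤ : ℕ∞) (pd2 f) := by
  unfold pd2
  exact (hf.fderiv_right (m := (⊤ : ℕ∞)) (by simp)).clm_apply contDiff_const

lemma smooth_diff {E : Type*} [NormedAddCommGroup E] [NormedSpace ℝ E] {f : ℝ × ℝ → E}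
    (hf : ContDiff ℝ (⊤ : ℕ∞) f) (x : ℝ × ℝ) : DifferentiableAt ℝ f x :=
  (hf.differentiable (by simp)) x

lemma D1_smooth {A : ℝ × ℝ → ℝ} {f : ℝ × ℝ → ℂ} (hA : ContDiff ℝ (⊤ : ℕ∞) A)
    (hf : ContDiff ℝ (⊤ : ℕ∞) f) : ContDiff ℝ (⊤ : ℕ∞) (D1 A f) := by
  unfold D1
  exact (pd1_smooth hf).sub ((contDiff_const.mul (Complex.ofRealCLM.contDiff.comp hA)).mul hf)

lemma D2_smooth {A : ℝ × ℝ → ℝ} {f : ℝ × ℝ → ℂ} (hA : ContDiff ℝ (⊤ : ℕ∞) A)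
    (hf : ContDiff ℝ (⊤ : ℕ∞) f) : ContDiff ℝ (⊤ : ℕ∞) (D2 A f) := by
  unfold D2
  exact (pd2_smooth hf).sub ((contDiff_const.mul (Complex.ofRealCLM.contDiff.comp hA)).mul hf)

lemma curv_smooth {A1 A2 : ℝ × ℝ → ℝ} (hA1 : ContDiff ℝ (⊤ : ℕ∞) A1)
    (hA2 : ContDiff ℝ (⊤ : ℕ∞) A2) : ContDiff ℝ (⊤ : ℕ∞) (curv A1 A2) := by
  unfold curv
  exact (pd1_smooth hA2).sub (pd2_smooth hA1)

lemma hasF_conjmul {f g : ℝ × ℝ → ℂ} (hf : ContDiff ℝ (⊤ : ℕ∞) f)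
    (hg : ContDiff ℝ (⊤ : ℕ∞) g) (x e : ℝ × ℝ) :
    fderiv ℝ (fun y => (starRingEnd ℂ) (f y) * g y) x e =
      (starRingEnd ℂ) (fderiv ℝ f x e) * g x + (starRingEnd ℂ) (f x) * fderiv ℝ g x e := by
  have h1 : HasFDerivAt (fun y => (starRingEnd ℂ) (f y))
      ((Complex.conjCLE : ℂ →L[ℝ] ℂ).comp (fderiv ℝ f x)) x :=
    (Complex.conjCLE : ℂ →L[ℝ] ℂ).hasFDerivAt.comp x (smooth_diff hf x).hasFDerivAt
  have h2 := h1.mul (smooth_diff hg x).hasFDerivAt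
  have h3 := h2.fderiv
  have h4 : fderiv ℝ (fun y => (starRingEnd ℂ) (f y) * g y) x e = _ := congrArg (fun L => L e) h3
  rw [h4]
  simp
  ring

lemma conjmul_smooth {f g : ℝ × ℝ → ℂ} (hf : ContDiff ℝ (⊤ : ℕ∞) f)
    (hg : ContDiff ℝ (⊤ : ℕ∞) g) :
    ContDiff ℝ (⊤ : ℕ∞) (fun y => (starRingEnd ℂ) (f y) * g y) :=
  ((Complex.conjCLE : ℂ →L[ℝ] ℂ).contDiff.comp hf).mul hg

lemma pd_re {f : ℝ × ℝ → ℂ} (hf : ContDiff ℝ (⊤ : ℕ∞) f) (x e : ℝ × ℝ) :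
    fderiv ℝ (fun y => (f y).re) x e = (fderiv ℝ f x e).re := by
  have h1 : HasFDerivAt (fun y => (f y).re) (Complex.reCLM.comp (fderiv ℝ f x)) x :=
    Complex.reCLM.hasFDerivAt.comp x (smooth_diff hf x).hasFDerivAt
  rw [h1.fderiv]; rfl

lemma pd_im {f : ℝ × ℝ → ℂ} (hf : ContDiff ℝ (⊤ : ℕ∞) f) (x e : ℝ × ℝ) :
    fderiv ℝ (fun y => (f y).im) x e = (fderiv ℝ f x e).im := by
  have h1 : HasFDerivAt (fun y => (f y).im) (Complex.imCLM.comp (fderiv ℝ f x)) x :=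
    Complex.imCLM.hasFDerivAt.comp x (smooth_diff hf x).hasFDerivAt
  rw [h1.fderiv]; rfl

lemma leib1 (A : ℝ × ℝ → ℝ) {f g : ℝ × ℝ → ℂ} (hf : ContDiff ℝ (⊤ : ℕ∞) f)
    (hg : ContDiff ℝ (⊤ : ℕ∞) g) (x : ℝ × ℝ) :
    pd1 (fun y => (starRingEnd ℂ) (f y) * g y) x =
      (starRingEnd ℂ) (D1 A f x) * g x + (starRingEnd ℂ) (f x) * D1 A g x := by
  unfold D1 pd1
  rw [hasF_conjmul hf hg]
  simp only [map_sub, map_mul, Complex.conj_I, Complex.conj_ofReal]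
  ring

lemma leib2 (A : ℝ × ℝ → ℝ) {f g : ℝ × ℝ → ℂ} (hf : ContDiff ℝ (⊤ : ℕ∞) f)
    (hg : ContDiff ℝ (⊤ : ℕ∞) g) (x : ℝ × ℝ) :
    pd2 (fun y => (starRingEnd ℂ) (f y) * g y) x =
      (starRingEnd ℂ) (D2 A f x) * g x + (starRingEnd ℂ) (f x) * D2 A g x := by
  unfold D2 pd2
  rw [hasF_conjmul hf hg]
  simp only [map_sub, map_mul, Complex.conj_I, Complex.conj_ofReal]
  ring

lemma fderiv_cov {A : ℝ × ℝ → ℝ} {f g : ℝ × ℝ → ℂ} (hA : ContDiff ℝ (⊤ : ℕ∞) A)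
    (hf : ContDiff ℝ (⊤ : ℕ∞) f) (hg : ContDiff ℝ (⊤ : ℕ∞) g) (x e : ℝ × ℝ) :
    fderiv ℝ (fun y => g y - Complex.I * (A y) * f y) x e =
      fderiv ℝ g x e - Complex.I * ((fderiv ℝ A x e : ℝ) * f x + A x * fderiv ℝ f x e) := by
  have h0 : HasFDerivAt (fun y => (A y : ℂ)) (Complex.ofRealCLM.comp (fderiv ℝ A x)) x :=
    Complex.ofRealCLM.hasFDerivAt.comp x (smooth_diff hA x).hasFDerivAt
  have h2 := (smooth_diff hg x).hasFDerivAt.sub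
    ((h0.const_mul Complex.I).mul (smooth_diff hf x).hasFDerivAt)
  have h3 := h2.fderiv
  have h4 : fderiv ℝ (fun y => g y - Complex.I * (A y) * f y) x e = _ :=
    congrArg (fun L => L e) h3
  rw [h4]
  simp
  ring

lemma pd_comm {f : ℝ × ℝ → ℂ} (hf : ContDiff ℝ (⊤ : ℕ∞) f) (x : ℝ × ℝ) :
    pd1 (pd2 f) x = pd2 (pd1 f) x := by
  have hs : IsSymmSndFDerivAt ℝ f x :=
    (hf.contDiffAt).isSymmSndFDerivAt (by
      rw [minSmoothness_of_isRCLikeNormedField]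
      exact WithTop.coe_le_coe.2 (le_top : (2 : ℕ∞) ≤ ⊤))
  have hd : DifferentiableAt ℝ (fderiv ℝ f) x :=
    ((hf.fderiv_right (m := (⊤ : ℕ∞)) (by simp)).differentiable (by simp)) x
  have key : ∀ a e : ℝ × ℝ, fderiv ℝ (fun y => fderiv ℝ f y a) x e =
      fderiv ℝ (fderiv ℝ f) x e a := by
    intro a e
    rw [fderiv_clm_apply hd (differentiableAt_const a)]
    simp
  unfold pd1 pd2
  rw [key, key]
  exact hs _ _

lemma D_comm {u : ℝ × ℝ → ℂ} {A1 A2 : ℝ × ℝ → ℝ}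
    (hu : ContDiff ℝ (⊤ : ℕ∞) u) (hA1 : ContDiff ℝ (⊤ : ℕ∞) A1)
    (hA2 : ContDiff ℝ (⊤ : ℕ∞) A2) (x : ℝ × ℝ) :
    D1 A1 (D2 A2 u) x = D2 A2 (D1 A1 u) x - Complex.I * (curv A1 A2 x) * u x := by
  have e1 : pd1 (D2 A2 u) x = _ := fderiv_cov hA2 hu (pd2_smooth hu) x (1, 0)
  have e2 : pd2 (D1 A1 u) x = _ := fderiv_cov hA1 hu (pd1_smooth hu) x (0, 1)
  have e3 := pd_comm hu x
  unfold pd1 pd2 at e3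
  have l1 : D1 A1 (D2 A2 u) x = pd1 (D2 A2 u) x - Complex.I * A1 x * D2 A2 u x := rfl
  have l2 : D2 A2 (D1 A1 u) x = pd2 (D1 A1 u) x - Complex.I * A2 x * D1 A1 u x := rfl
  rw [l1, l2, e1, e2]
  unfold D1 D2 curv pd1 pd2
  push_cast
  linear_combination e3

/-- Laplacian of the curvature. -/
lemma lap_curv {ε : ℝ} {u : ℝ × ℝ → ℂ} {A1 A2 : ℝ × ℝ → ℝ}
    (hu : ContDiff ℝ (⊤ : ℕ∞) u) (hA1 : ContDiff ℝ (⊤ : ℕ∞) A1)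
    (hA2 : ContDiff ℝ (⊤ : ℕ∞) A2) (hY : IsYMH ε u A1 A2) (x : ℝ × ℝ) :
    ε ^ 2 * (pd1 (pd1 (curv A1 A2)) x + pd2 (pd2 (curv A1 A2)) x) =
      ‖u x‖ ^ 2 * curv A1 A2 x + 2 * ((starRingEnd ℂ) (D2 A2 u x) * D1 A1 u x).im := by
  obtain ⟨-, h2, h1⟩ := hY
  have hF := curv_smooth hA1 hA2
  have d1 := D1_smooth hA1 hu
  have d2 := D2_smooth hA2 hu
  have a1 : ε ^ 2 * pd1 (pd1 (curv A1 A2)) x =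
      -(pd1 (fun y => (starRingEnd ℂ) (u y) * D2 A2 u y) x).im := by
    have : (fun y => ε ^ 2 * pd1 (curv A1 A2) y) =
      fun y => -((starRingEnd ℂ) (u y) * D2 A2 u y).im := funext h1
    have t := congrArg (fun f => fderiv ℝ f x (1, 0)) this
    rw [fderiv_const_mul (smooth_diff (pd1_smooth hF) x), fderiv_fun_neg] at t
    simp only [smul_apply, neg_apply, smul_eq_mul] at t
    rw [pd_im (conjmul_smooth hu d2)] at t
    exact t
  have a2 : ε ^ 2 * pd2 (pd2 (curv A1 A2)) x =
      (pd2 (fun y => (starRingEnd ℂ) (u y) * D1 A1 u y) x).im := by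
    have : (fun y => ε ^ 2 * pd2 (curv A1 A2) y) =
      fun y => ((starRingEnd ℂ) (u y) * D1 A1 u y).im := funext h2
    have t := congrArg (fun f => fderiv ℝ f x (0, 1)) this
    rw [fderiv_const_mul (smooth_diff (pd2_smooth hF) x)] at t
    simp only [smul_apply, smul_eq_mul] at t
    rw [pd_im (conjmul_smooth hu d1)] at t
    exact t
  rw [mul_add, a1, a2, leib1 A1 hu d2, leib2 A2 hu d1, D_comm hu hA1 hA2, ← Complex.normSq_eq_norm_sq,
    Complex.normSq_apply]
  simp
  ring

lemma hfun_smooth (ε : ℝ) {u : ℝ × ℝ → ℂ} (hu : ContDiff ℝ (⊤ : ℕ∞) u) :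
    ContDiff ℝ (⊤ : ℕ∞) (hfun ε u) := by
  unfold hfun
  exact (contDiff_const.sub (hu.norm_sq ℝ)).div_const _

/-- Laplacian of `h`. -/
lemma lap_h {ε : ℝ} (hε : 0 < ε) {u : ℝ × ℝ → ℂ} {A1 A2 : ℝ × ℝ → ℝ}
    (hu : ContDiff ℝ (⊤ : ℕ∞) u) (hA1 : ContDiff ℝ (⊤ : ℕ∞) A1)
    (hA2 : ContDiff ℝ (⊤ : ℕ∞) A2) (hY : IsYMH ε u A1 A2) (x : ℝ × ℝ) :
    ε ^ 2 * (pd1 (pd1 (hfun ε u)) x + pd2 (pd2 (hfun ε u)) x) =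
      ‖u x‖ ^ 2 * hfun ε u x - ‖D1 A1 u x‖ ^ 2 - ‖D2 A2 u x‖ ^ 2 := by
  have h0 := hY.1 x
  have d1 := D1_smooth hA1 hu
  have d2 := D2_smooth hA2 hu
  have hN : hfun ε u = fun y => (1 / (2 * ε ^ 2)) * (1 - ((starRingEnd ℂ) (u y) * u y).re) := by
    funext y
    unfold hfun
    rw [← Complex.normSq_eq_norm_sq, Complex.normSq_apply]
    simp
    ring
  have hR : ∀ y, DifferentiableAt ℝ (fun y => ((starRingEnd ℂ) (u y) * u y).re) y := fun y =>
    smooth_diff (Complex.reCLM.contDiff.comp (conjmul_smooth hu hu)) y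
  have b : ∀ y e, fderiv ℝ (hfun ε u) y e =
      -(1 / (2 * ε ^ 2)) * (fderiv ℝ (fun y => (starRingEnd ℂ) (u y) * u y) y e).re := by
    intro y e
    rw [hN, fderiv_const_mul ((hR y).const_sub 1), fderiv_const_sub]
    simp only [smul_apply, neg_apply, smul_eq_mul]
    rw [pd_re (conjmul_smooth hu hu)]
    ring
  have b1 : pd1 (hfun ε u) = fun y => -(1 / ε ^ 2) * ((starRingEnd ℂ) (u y) * D1 A1 u y).re := by
    funext y
    have := leib1 A1 hu hu y
    unfold pd1 at this ⊢
    rw [b, this]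
    simp
    ring
  have b2 : pd2 (hfun ε u) = fun y => -(1 / ε ^ 2) * ((starRingEnd ℂ) (u y) * D2 A2 u y).re := by
    funext y
    have := leib2 A2 hu hu y
    unfold pd2 at this ⊢
    rw [b, this]
    simp
    ring
  have c1 : pd1 (pd1 (hfun ε u)) x = -(1 / ε ^ 2) *
      (pd1 (fun y => (starRingEnd ℂ) (u y) * D1 A1 u y) x).re := by
    rw [b1]
    unfold pd1
    have hd : DifferentiableAt ℝ (fun y => ((starRingEnd ℂ) (u y) * D1 A1 u y).re) x :=
      smooth_diff (Complex.reCLM.contDiff.comp (conjmul_smooth hu d1)) x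
    rw [fderiv_const_mul hd]
    simp only [smul_apply, smul_eq_mul]
    rw [← pd_re (conjmul_smooth hu d1)]
  have c2 : pd2 (pd2 (hfun ε u)) x = -(1 / ε ^ 2) *
      (pd2 (fun y => (starRingEnd ℂ) (u y) * D2 A2 u y) x).re := by
    rw [b2]
    unfold pd2
    have hd : DifferentiableAt ℝ (fun y => ((starRingEnd ℂ) (u y) * D2 A2 u y).re) x :=
      smooth_diff (Complex.reCLM.contDiff.comp (conjmul_smooth hu d2)) x
    rw [fderiv_const_mul hd]
    simp only [smul_apply, smul_eq_mul]
    rw [← pd_re (conjmul_smooth hu d2)]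
  have hε2 : ε ^ 2 ≠ 0 := by positivity
  have e0 : D1 A1 (D1 A1 u) x = -(hfun ε u x : ℂ) * u x - D2 A2 (D2 A2 u) x := by
    linear_combination -h0
  rw [c1, c2, leib1 A1 hu d1, leib2 A2 hu d2, e0]
  simp only [← Complex.normSq_eq_norm_sq, Complex.normSq_apply]
  simp
  field_simp
  ring

/-- One-variable necessary second order condition. -/
lemma snd_deriv_nonneg {φ ψ : ℝ → ℝ} {s : ℝ} (h1 : ∀ t, HasDerivAt φ (ψ t) t)
    (h2 : HasDerivAt ψ s 0) (hmin : IsLocalMin φ 0) : 0 ≤ s := by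
  by_contra hs
  push Not at hs
  have hd : deriv φ = ψ := funext fun t => (h1 t).deriv
  have h0 : deriv φ 0 = 0 := hmin.deriv_eq_zero
  have hmax : IsLocalMax φ 0 := by
    apply isLocalMax_of_deriv_deriv_neg _ h0 (h1 0).continuousAt
    rw [hd, h2.deriv]; exact hs
  have hc : φ =ᶠ[nhds 0] fun _ => φ 0 := by
    filter_upwards [hmin, hmax] with t a b
    exact le_antisymm b a
  have hψ : ψ =ᶠ[nhds 0] fun _ => 0 := by
    have := hc.deriv
    rw [hd] at this
    simpa using this
  have := hψ.deriv_eq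
  rw [h2.deriv] at this
  simp at this
  linarith

lemma line1 {f : ℝ × ℝ → ℝ} (hf : ContDiff ℝ (⊤ : ℕ∞) f) (x : ℝ × ℝ) (t : ℝ) :
    HasDerivAt (fun t : ℝ => f (x.1 + t, x.2)) (pd1 f (x.1 + t, x.2)) t := by
  have hl : HasDerivAt (fun t : ℝ => ((x.1 + t, x.2) : ℝ × ℝ)) (1, 0) t :=
    ((hasDerivAt_id t).const_add x.1).prodMk (hasDerivAt_const t x.2)
  exact (smooth_diff hf _).hasFDerivAt.comp_hasDerivAt t hl

lemma line2 {f : ℝ × ℝ → ℝ} (hf : ContDiff ℝ (⊤ : ℕ∞) f) (x : ℝ × ℝ) (t : ℝ) :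
    HasDerivAt (fun t : ℝ => f (x.1, x.2 + t)) (pd2 f (x.1, x.2 + t)) t := by
  have hl : HasDerivAt (fun t : ℝ => ((x.1, x.2 + t) : ℝ × ℝ)) (0, 1) t :=
    (hasDerivAt_const t x.1).prodMk ((hasDerivAt_id t).const_add x.2)
  exact (smooth_diff hf _).hasFDerivAt.comp_hasDerivAt t hl

lemma lap_nonneg_of_min {f : ℝ × ℝ → ℝ} (hf : ContDiff ℝ (⊤ : ℕ∞) f) {x : ℝ × ℝ}
    (hm : IsLocalMin f x) : 0 ≤ pd1 (pd1 f) x + pd2 (pd2 f) x := by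
  have m1 : IsLocalMin (fun t : ℝ => f (x.1 + t, x.2)) 0 := by
    have hc : Filter.Tendsto (fun t : ℝ => ((x.1 + t, x.2) : ℝ × ℝ)) (nhds 0) (nhds x) := by
      have : Continuous (fun t : ℝ => ((x.1 + t, x.2) : ℝ × ℝ)) := by fun_prop
      simpa using this.tendsto 0
    have := hc.eventually hm
    simpa [IsLocalMin, IsMinFilter] using this
  have m2 : IsLocalMin (fun t : ℝ => f (x.1, x.2 + t)) 0 := by
    have hc : Filter.Tendsto (fun t : ℝ => ((x.1, x.2 + t) : ℝ × ℝ)) (nhds 0) (nhds x) := by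
      have : Continuous (fun t : ℝ => ((x.1, x.2 + t) : ℝ × ℝ)) := by fun_prop
      simpa using this.tendsto 0
    have := hc.eventually hm
    simpa [IsLocalMin, IsMinFilter] using this
  have s1 := snd_deriv_nonneg (line1 hf x) (line1 (pd1_smooth hf) x 0) m1
  have s2 := snd_deriv_nonneg (line2 hf x) (line2 (pd2_smooth hf) x 0) m2
  simp only [add_zero, Prod.mk.eta] at s1 s2
  linarith

/-- The barrier. -/
def barr (α K : ℝ) (p x : ℝ × ℝ) : ℝ :=
  Real.exp (-α * ((x.1 - p.1) ^ 2 + (x.2 - p.2) ^ 2)) - K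

lemma barr_smooth (α K : ℝ) (p : ℝ × ℝ) : ContDiff ℝ (⊤ : ℕ∞) (barr α K p) := by
  unfold barr
  fun_prop

lemma barr_lap (α K : ℝ) (p x : ℝ × ℝ) :
    pd1 (pd1 (barr α K p)) x + pd2 (pd2 (barr α K p)) x =
      (4 * α ^ 2 * ((x.1 - p.1) ^ 2 + (x.2 - p.2) ^ 2) - 4 * α) *
        Real.exp (-α * ((x.1 - p.1) ^ 2 + (x.2 - p.2) ^ 2)) := by
  have hs := barr_smooth α K p
  have q1 : ∀ (x : ℝ × ℝ) (t : ℝ), HasDerivAt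
      (fun t : ℝ => -α * ((x.1 + t - p.1) ^ 2 + (x.2 - p.2) ^ 2))
      (-α * (2 * (x.1 + t - p.1))) t := by
    intro x t
    have := (((((hasDerivAt_id t).const_add x.1).sub_const p.1).pow 2).add_const
      ((x.2 - p.2) ^ 2)).const_mul (-α)
    refine this.congr_deriv ?_
    simp
  have q2 : ∀ (x : ℝ × ℝ) (t : ℝ), HasDerivAt
      (fun t : ℝ => -α * ((x.1 - p.1) ^ 2 + (x.2 + t - p.2) ^ 2))
      (-α * (2 * (x.2 + t - p.2))) t := by
    intro x t
    have := (((((hasDerivAt_id t).const_add x.2).sub_const p.2).pow 2).const_add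
      ((x.1 - p.1) ^ 2)).const_mul (-α)
    refine this.congr_deriv ?_
    simp
  have e1 : pd1 (barr α K p) = fun x => Real.exp (-α * ((x.1 - p.1) ^ 2 + (x.2 - p.2) ^ 2)) *
      (-α * (2 * (x.1 - p.1))) := by
    funext y
    have a := line1 hs y 0
    have b := ((q1 y 0).exp).sub_const K
    have := a.unique b
    simpa using this
  have e2 : pd2 (barr α K p) = fun x => Real.exp (-α * ((x.1 - p.1) ^ 2 + (x.2 - p.2) ^ 2)) *
      (-α * (2 * (x.2 - p.2))) := by
    funext y
    have a := line2 hs y 0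
    have b := ((q2 y 0).exp).sub_const K
    have := a.unique b
    simpa using this
  have f1 : pd1 (pd1 (barr α K p)) x = (4 * α ^ 2 * (x.1 - p.1) ^ 2 - 2 * α) *
      Real.exp (-α * ((x.1 - p.1) ^ 2 + (x.2 - p.2) ^ 2)) := by
    have a := line1 (pd1_smooth hs) x 0
    have b := ((q1 x 0).exp).mul
      (((((hasDerivAt_id (0:ℝ)).const_add x.1).sub_const p.1).const_mul 2).const_mul (-α))
    rw [e1] at a ⊢
    have := a.unique b
    simp only [add_zero, id_eq, Prod.mk.eta] at this
    rw [this]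
    ring
  have f2 : pd2 (pd2 (barr α K p)) x = (4 * α ^ 2 * (x.2 - p.2) ^ 2 - 2 * α) *
      Real.exp (-α * ((x.1 - p.1) ^ 2 + (x.2 - p.2) ^ 2)) := by
    have a := line2 (pd2_smooth hs) x 0
    have b := ((q2 x 0).exp).mul
      (((((hasDerivAt_id (0:ℝ)).const_add x.2).sub_const p.2).const_mul 2).const_mul (-α))
    rw [e2] at a ⊢
    have := a.unique b
    simp only [add_zero, id_eq, Prod.mk.eta] at this
    rw [this]
    ring
  rw [f1, f2]
  ring

lemma lap_sub_smul {f g : ℝ × ℝ → ℝ} (hf : ContDiff ℝ (⊤ : ℕ∞) f)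
    (hg : ContDiff ℝ (⊤ : ℕ∞) g) (a b : ℝ) (x : ℝ × ℝ) :
    pd1 (pd1 (fun y => a * f y + b * g y)) x + pd2 (pd2 (fun y => a * f y + b * g y)) x =
      a * (pd1 (pd1 f) x + pd2 (pd2 f) x) + b * (pd1 (pd1 g) x + pd2 (pd2 g) x) := by
  have key : ∀ {f g : ℝ × ℝ → ℝ}, ContDiff ℝ (⊤ : ℕ∞) f → ContDiff ℝ (⊤ : ℕ∞) g → ∀ x e,
      fderiv ℝ (fun y => a * f y + b * g y) x e = a * fderiv ℝ f x e + b * fderiv ℝ g x e := by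
    intro f g hf hg x e
    rw [fderiv_fun_add ((smooth_diff hf x).const_mul a) ((smooth_diff hg x).const_mul b),
      fderiv_const_mul (smooth_diff hf x), fderiv_const_mul (smooth_diff hg x)]
    simp
  have k1 : pd1 (fun y => a * f y + b * g y) = fun y => a * pd1 f y + b * pd1 g y :=
    funext fun y => key hf hg y _
  have k2 : pd2 (fun y => a * f y + b * g y) = fun y => a * pd2 f y + b * pd2 g y :=
    funext fun y => key hf hg y _
  have l1 : pd1 (fun y => a * pd1 f y + b * pd1 g y) x = _ :=
    key (pd1_smooth hf) (pd1_smooth hg) x (1, 0)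
  have l2 : pd2 (fun y => a * pd2 f y + b * pd2 g y) x = _ :=
    key (pd2_smooth hf) (pd2_smooth hg) x (0, 1)
  rw [k1, k2, l1, l2]
  unfold pd1 pd2
  ring

/-- Strong maximum principle. -/
lemma strong_min {v : ℝ × ℝ → ℝ} (hv : ContDiff ℝ (⊤ : ℕ∞) v) (hpos : ∀ x, 0 ≤ v x)
    {C : ℝ} (hC : 0 ≤ C) (hL : ∀ x, pd1 (pd1 v) x + pd2 (pd2 v) x ≤ C * v x)
    {x₀ : ℝ × ℝ} (h0 : v x₀ = 0) (p : ℝ × ℝ) : v p = 0 := by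
  by_contra hp
  have hp' : 0 < v p := lt_of_le_of_ne (hpos p) (Ne.symm hp)
  obtain ⟨r, hr, hball⟩ := Metric.continuousAt_iff.1 (hv.continuous.continuousAt (x := p))
    (v p / 2) (by linarith)
  let ρ : ℝ × ℝ → ℝ := fun x => (x.1 - p.1) ^ 2 + (x.2 - p.2) ^ 2
  have hρ0 : ∀ x, 0 ≤ ρ x := fun x => by positivity
  have hρc : Continuous ρ := by fun_prop
  have hnear : ∀ x, ρ x < r ^ 2 → v p / 2 < v x := by
    intro x hx
    have hd : dist x p < r := by
      rw [Prod.dist_eq, Real.dist_eq, Real.dist_eq]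
      apply max_lt
      · apply abs_lt_of_sq_lt_sq _ hr.le
        have := sq_nonneg (x.2 - p.2); simp only [ρ] at hx; linarith
      · apply abs_lt_of_sq_lt_sq _ hr.le
        have := sq_nonneg (x.1 - p.1); simp only [ρ] at hx; linarith
    have := hball hd
    rw [Real.dist_eq, abs_lt] at this
    linarith [this.1]
  obtain ⟨R2, hR2⟩ : ∃ R2, R2 = ρ x₀ + 1 := ⟨_, rfl⟩
  obtain ⟨α, hα, hαC⟩ : ∃ α : ℝ, 0 < α ∧ C < 4 * α ^ 2 * r ^ 2 - 4 * α := by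
    refine ⟨(C + 2) / r ^ 2 + (C + 2), by positivity, ?_⟩
    set α := (C + 2) / r ^ 2 + (C + 2) with hα
    have h1 : C + 2 ≤ α * r ^ 2 := by
      rw [hα, add_mul, div_mul_cancel₀ _ (by positivity)]
      nlinarith [sq_nonneg r]
    have h2 : C + 2 ≤ α := by
      rw [hα]; have : 0 ≤ (C + 2) / r ^ 2 := by positivity
      linarith
    nlinarith
  let K := Real.exp (-α * R2)
  let δ := v p / 2
  have hδ : 0 < δ := by simp only [δ]; linarith
  let w := barr α K p
  have hw : ∀ x, w x = Real.exp (-α * ρ x) - K := fun x => rfl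
  let g : ℝ × ℝ → ℝ := fun y => 1 * v y + (-δ) * w y
  have hgs : ContDiff ℝ (⊤ : ℕ∞) g :=
    (contDiff_const.mul hv).add (contDiff_const.mul (barr_smooth α K p))
  let S : Set (ℝ × ℝ) := {x | ρ x ≤ R2}
  have hScl : IsClosed S := isClosed_le hρc continuous_const
  have hSb : S ⊆ Metric.closedBall p (R2 + 1) := by
    intro x hx
    have hx' : ρ x ≤ R2 := hx
    have hR0 : 0 ≤ R2 := (hρ0 x).trans hx'
    rw [Metric.mem_closedBall, Prod.dist_eq, Real.dist_eq, Real.dist_eq]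
    simp only [ρ] at hx'
    apply max_le
    · apply abs_le_of_sq_le_sq _ (by linarith)
      nlinarith [sq_nonneg (x.2 - p.2)]
    · apply abs_le_of_sq_le_sq _ (by linarith)
      nlinarith [sq_nonneg (x.1 - p.1)]
  have hSc : IsCompact S := (isCompact_closedBall p (R2 + 1)).of_isClosed_subset hScl hSb
  have hx0S : x₀ ∈ S := by show ρ x₀ ≤ R2; linarith
  obtain ⟨y, hyS, hymin⟩ := hSc.exists_isMinOn ⟨x₀, hx0S⟩ hgs.continuous.continuousOn
  have hgx0 : g x₀ < 0 := by
    have : 0 < w x₀ := by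
      rw [hw, sub_pos]
      apply Real.exp_lt_exp.2
      nlinarith
    simp only [g, h0]
    nlinarith
  have hgy : g y < 0 := lt_of_le_of_lt (hymin hx0S) hgx0
  have hwy : w y ≤ 1 := by
    rw [hw]
    have : Real.exp (-α * ρ y) ≤ 1 := by
      rw [Real.exp_le_one_iff]; nlinarith [hρ0 y]
    have : 0 < K := Real.exp_pos _
    linarith
  have hyr : r ^ 2 ≤ ρ y := by
    by_contra hlt
    push Not at hlt
    have := hnear y hlt
    simp only [g] at hgy
    have : δ * w y ≤ δ := by nlinarith
    simp only [δ] at *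
    linarith
  have hyR : ρ y < R2 := by
    apply lt_of_le_of_ne hyS
    intro he
    have : w y = 0 := by rw [hw, he]; simp [K]
    simp only [g, this] at hgy
    linarith [hpos y]
  have hloc : IsLocalMin g y := by
    apply hymin.isLocalMin
    apply Filter.mem_of_superset ((isOpen_lt hρc continuous_const).mem_nhds hyR)
    intro z hz
    have hz' : ρ z < R2 := hz
    exact hz'.le
  have hlap := lap_nonneg_of_min hgs hloc
  have hexp := lap_sub_smul hv (barr_smooth α K p) 1 (-δ) y
  rw [hexp, barr_lap] at hlap
  have hE : 0 < Real.exp (-α * ρ y) := Real.exp_pos _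
  have hK : 0 < K := Real.exp_pos _
  have hLy := hL y
  have hgy' : v y < δ * w y := by simp only [g] at hgy; linarith
  rw [hw] at hgy'
  have h1 : C * Real.exp (-α * ρ y) <
      (4 * α ^ 2 * ρ y - 4 * α) * Real.exp (-α * ρ y) := by
    apply mul_lt_mul_of_pos_right _ hE
    have : 4 * α ^ 2 * r ^ 2 ≤ 4 * α ^ 2 * ρ y := by gcongr
    linarith
  have h2 : C * v y ≤ C * (δ * (Real.exp (-α * ρ y) - K)) :=
    mul_le_mul_of_nonneg_left hgy'.le hC
  have h3 := mul_lt_mul_of_pos_left h1 hδ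
  have h4 : 0 ≤ C * (δ * K) := by positivity
  change 0 ≤ 1 * _ + -δ * ((4 * α ^ 2 * ρ y - 4 * α) * Real.exp (-α * ρ y)) at hlap
  nlinarith

lemma periodic_max {f : ℝ × ℝ → ℝ} (hf : Continuous f) (hp : Periodic2 f) :
    ∃ x, ∀ y, f y ≤ f x := by
  have hc : IsCompact (Set.Icc (0:ℝ) 1 ×ˢ Set.Icc (0:ℝ) 1) := isCompact_Icc.prod isCompact_Icc
  obtain ⟨x, -, hx⟩ := hc.exists_isMaxOn ⟨(0, 0), by simp⟩ hf.continuousOn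
  refine ⟨x, fun y => ?_⟩
  have p1 : ∀ b, Function.Periodic (fun t => f (t, b)) 1 := fun b t => (hp (t, b)).1
  have p2 : ∀ a, Function.Periodic (fun t => f (a, t)) 1 := fun a t => (hp (a, t)).2
  have e1 : f (Int.fract y.1, y.2) = f y := by
    have := (p1 y.2).sub_int_mul_eq (x := y.1) ⌊y.1⌋
    simpa only [mul_one, Int.self_sub_floor] using this
  have e2 : f (Int.fract y.1, Int.fract y.2) = f (Int.fract y.1, y.2) := by
    have := (p2 (Int.fract y.1)).sub_int_mul_eq (x := y.2) ⌊y.2⌋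
    simpa only [mul_one, Int.self_sub_floor] using this
  rw [← e1, ← e2]
  exact hx ⟨⟨Int.fract_nonneg _, (Int.fract_lt_one _).le⟩,
    ⟨Int.fract_nonneg _, (Int.fract_lt_one _).le⟩⟩

lemma torus_principle {f c : ℝ × ℝ → ℝ} (hf : ContDiff ℝ (⊤ : ℕ∞) f) (hfp : Periodic2 f)
    (hc : Continuous c) (hcp : Periodic2 c) (hc0 : ∀ x, 0 ≤ c x) (hcne : ∃ x, c x ≠ 0)
    (hL : ∀ x, c x * f x ≤ pd1 (pd1 f) x + pd2 (pd2 f) x) :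
    (∀ x, f x ≤ 0) ∧ ((∃ x₀, f x₀ = 0) → ∀ x, f x = 0) := by
  obtain ⟨xc, hxc⟩ := periodic_max hc hcp
  obtain ⟨xm, hxm⟩ := periodic_max hf.continuous hfp
  have key : ∀ M : ℝ, 0 ≤ M → (∀ x, f x ≤ M) → (∃ x₀, f x₀ = M) → ∀ x, f x = M := by
    rintro M hM hle ⟨x₀, hx₀⟩ x
    have hs : ContDiff ℝ (⊤ : ℕ∞) (fun y => M * (fun _ => (1:ℝ)) y + (-1) * f y) := by
      fun_prop
    have := strong_min hs (fun y => by have := hle y; simp; linarith) (hc0 xc) (fun y => ?_)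
      (x₀ := x₀) (by simp [hx₀]) x
    · simp at this; linarith
    · rw [lap_sub_smul contDiff_const hf]
      have z : pd1 (pd1 (fun _ : ℝ × ℝ => (1:ℝ))) y + pd2 (pd2 (fun _ : ℝ × ℝ => (1:ℝ))) y = 0 := by
        have a1 : pd1 (fun _ : ℝ × ℝ => (1:ℝ)) = fun _ => 0 := by funext; simp [pd1]
        have a2 : pd2 (fun _ : ℝ × ℝ => (1:ℝ)) = fun _ => 0 := by funext; simp [pd2]
        rw [a1, a2]; simp [pd1, pd2]
      rw [z]
      have h1 := hL y
      have h2 : c y * (M - f y) ≤ c xc * (M - f y) :=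
        mul_le_mul_of_nonneg_right (hxc y) (by linarith [hle y])
      have h3 := mul_nonneg (hc0 y) hM
      simp only
      nlinarith
  have hle : ∀ x, f x ≤ 0 := by
    by_contra hcon
    push Not at hcon
    obtain ⟨z, hz⟩ := hcon
    have hM : 0 < f xm := lt_of_lt_of_le hz (hxm z)
    have hall := key (f xm) hM.le hxm ⟨xm, rfl⟩
    obtain ⟨q, hq⟩ := hcne
    have hfq : f = fun _ => f xm := funext hall
    have h1 := hL q
    have h2 : pd1 (pd1 f) q + pd2 (pd2 f) q = 0 := by
      generalize f xm = M at hfq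
      subst hfq
      have a1 : pd1 (fun _ : ℝ × ℝ => M) = fun _ => 0 := by funext; simp [pd1]
      have a2 : pd2 (fun _ : ℝ × ℝ => M) = fun _ => 0 := by funext; simp [pd2]
      rw [a1, a2]; simp [pd1, pd2]
    rw [h2, hall q] at h1
    have : 0 < c q := lt_of_le_of_ne (hc0 q) (Ne.symm hq)
    nlinarith
  exact ⟨hle, key 0 le_rfl hle⟩

lemma pd1_periodic {f : ℝ × ℝ → ℝ} (hp : Periodic2 f) (e : ℝ × ℝ) :
    Periodic2 (fun x => fderiv ℝ f x e) := by
  intro x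
  have h1 : (fun y => f (y + (1, 0))) = f := by
    funext y
    have := (hp y).1
    rw [← this]; congr 1; ext <;> simp
  have h2 : (fun y => f (y + (0, 1))) = f := by
    funext y
    have := (hp y).2
    rw [← this]; congr 1; ext <;> simp
  constructor
  · have := fderiv_comp_add_right (𝕜 := ℝ) (f := f) (x := x) (1, 0)
    rw [h1] at this
    have e : (x.1 + 1, x.2) = x + (1, 0) := by ext <;> simp
    simp only [e, this]
  · have := fderiv_comp_add_right (𝕜 := ℝ) (f := f) (x := x) (0, 1)
    rw [h2] at this
    have e : (x.1, x.2 + 1) = x + (0, 1) := by ext <;> simp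
    simp only [e, this]

/-- Pointwise bound on the curvature and rigidity (Proposition 3.5(a), flat torus case). -/
theorem curvature_pointwise_bound
    (ε : ℝ) (hε : 0 < ε) (u : ℝ × ℝ → ℂ) (A1 A2 : ℝ × ℝ → ℝ)
    (hu : ContDiff ℝ (⊤ : ℕ∞) u) (hup : Periodic2 u)
    (hA1 : ContDiff ℝ (⊤ : ℕ∞) A1) (hA1p : Periodic2 A1)
    (hA2 : ContDiff ℝ (⊤ : ℕ∞) A2) (hA2p : Periodic2 A2)
    (hYMH : IsYMH ε u A1 A2) (hne : ∃ x, u x ≠ 0) :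
    (∀ x, -hfun ε u x ≤ curv A1 A2 x ∧ curv A1 A2 x ≤ hfun ε u x) ∧
    ((∃ x₀, curv A1 A2 x₀ = hfun ε u x₀) → ∀ x, curv A1 A2 x = hfun ε u x) ∧
    ((∃ x₀, curv A1 A2 x₀ = -hfun ε u x₀) → ∀ x, curv A1 A2 x = -hfun ε u x) := by
  have hF := curv_smooth hA1 hA2
  have hh := hfun_smooth ε hu
  have hFp : Periodic2 (curv A1 A2) := by
    intro x
    have a := pd1_periodic hA2p (1, 0) x
    have b := pd1_periodic hA1p (0, 1) x
    unfold curv pd1 pd2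
    simp only at a b
    rw [a.1, a.2, b.1, b.2]
    exact ⟨rfl, rfl⟩
  have hhp : Periodic2 (hfun ε u) := by
    intro x
    unfold hfun
    rw [(hup x).1, (hup x).2]
    exact ⟨rfl, rfl⟩
  have hε2 : 0 < ε ^ 2 := by positivity
  have hcc : Continuous (fun x => ‖u x‖ ^ 2 / ε ^ 2) :=
    (hu.continuous.norm.pow 2).div_const _
  have hcp : Periodic2 (fun x => ‖u x‖ ^ 2 / ε ^ 2) := by
    intro x
    simp only [(hup x).1, (hup x).2]
    trivial
  have hc0 : ∀ x, 0 ≤ (fun x => ‖u x‖ ^ 2 / ε ^ 2) x := fun x => by positivity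
  have hcne : ∃ x, (fun x => ‖u x‖ ^ 2 / ε ^ 2) x ≠ 0 := by
    obtain ⟨x, hx⟩ := hne
    refine ⟨x, ?_⟩
    have : 0 < ‖u x‖ := norm_pos_iff.2 hx
    positivity
  have main : ∀ s : ℝ, s = 1 ∨ s = -1 →
      (∀ x, s * curv A1 A2 x + (-1) * hfun ε u x ≤ 0) ∧
      ((∃ x₀, s * curv A1 A2 x₀ + (-1) * hfun ε u x₀ = 0) →
        ∀ x, s * curv A1 A2 x + (-1) * hfun ε u x = 0) := by
    intro s hs
    refine torus_principle (f := fun x => s * curv A1 A2 x + (-1) * hfun ε u x)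
      ((contDiff_const.mul hF).add (contDiff_const.mul hh)) ?_ hcc hcp hc0 hcne ?_
    · intro x
      simp only [(hFp x).1, (hFp x).2, (hhp x).1, (hhp x).2]
      trivial
    · intro x
      rw [lap_sub_smul hF hh]
      have l1 := lap_curv hu hA1 hA2 hYMH x
      have l2 := lap_h hε hu hA1 hA2 hYMH x
      rw [div_mul_eq_mul_div, div_le_iff₀ hε2]
      have hsq : 0 ≤ ‖D1 A1 u x‖ ^ 2 + ‖D2 A2 u x‖ ^ 2 +
          s * (2 * ((starRingEnd ℂ) (D2 A2 u x) * D1 A1 u x).im) := by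
        simp only [← Complex.normSq_eq_norm_sq, Complex.normSq_apply]
        simp only [Complex.mul_im, Complex.conj_re, Complex.conj_im]
        rcases hs with rfl | rfl
        · nlinarith [sq_nonneg ((D1 A1 u x).re - (D2 A2 u x).im),
            sq_nonneg ((D1 A1 u x).im + (D2 A2 u x).re)]
        · nlinarith [sq_nonneg ((D1 A1 u x).re + (D2 A2 u x).im),
            sq_nonneg ((D1 A1 u x).im - (D2 A2 u x).re)]
      linear_combination hsq - s * l1 + l2
  obtain ⟨p1, p2⟩ := main 1 (Or.inl rfl)
  obtain ⟨m1, m2⟩ := main (-1) (Or.inr rfl)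
  refine ⟨fun x => ⟨by linarith [m1 x], by linarith [p1 x]⟩, ?_, ?_⟩
  · rintro ⟨x₀, h⟩ x
    have := p2 ⟨x₀, by rw [h]; ring⟩ x
    linarith
  · rintro ⟨x₀, h⟩ x
    have := m2 ⟨x₀, by rw [h]; ring⟩ x
    linarith
end
end

section
/- First Jacobi operator on the test pair built from σ and φ (Lemma 4.1(a), flat torus case): let (u, A) be a smooth solution of the YMH equations on U and let X = (X₁, X₂) ∈ ℝ² be a constant vector field (a Killing field of the flat torus). Then, with v = (X₁ − iX₂)·σ₊ and a = (F − h)·(−X₂, X₁), one has pointwise on U: J¹(v, a) = −2F·(X₁·D₁u + X₂·D₂u) + 2h·i·(X₂·D₁u − X₁·D₂u). -/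
open MeasureTheory Complex

noncomputable section

/-- The first Jacobi operator `J¹` of the Yang--Mills--Higgs energy. -/
def J1 (ε : ℝ) (u : ℝ × ℝ → ℂ) (A1 A2 : ℝ × ℝ → ℝ)
    (v : ℝ × ℝ → ℂ) (a1 a2 : ℝ × ℝ → ℝ) (x : ℝ × ℝ) : ℂ :=
  -(D1 A1 (D1 A1 v) x + D2 A2 (D2 A2 v) x)
    + 2 * Complex.I * ((a1 x : ℂ) * D1 A1 u x + (a2 x : ℂ) * D2 A2 u x)
    + Complex.I * ((pd1 a1 x + pd2 a2 x : ℝ) : ℂ) * u x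
    + (((‖u x‖ ^ 2 - 1) / (2 * ε ^ 2) : ℝ) : ℂ) * v x
    + (((u x * (starRingEnd ℂ) (v x)).re / ε ^ 2 : ℝ) : ℂ) * u x

namespace Aux

variable {U : Set (ℝ × ℝ)} {E : Type*} [NormedAddCommGroup E] [NormedSpace ℝ E]

theorem sm_dir (hU : IsOpen U) {f : ℝ × ℝ → E} (hf : ContDiffOn ℝ (⊤ : ℕ∞) f U) (w : ℝ × ℝ) :
    ContDiffOn ℝ (⊤ : ℕ∞) (fun x => fderiv ℝ f x w) U :=
  (hf.fderiv_of_isOpen hU (by simp)).clm_apply contDiffOn_const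

theorem sm_diff (hU : IsOpen U) {f : ℝ × ℝ → E} (hf : ContDiffOn ℝ (⊤ : ℕ∞) f U) {x : ℝ × ℝ}
    (hx : x ∈ U) : DifferentiableAt ℝ f x :=
  (hf.contDiffAt (hU.mem_nhds hx)).differentiableAt (by simp)

theorem sm_ofReal {f : ℝ × ℝ → ℝ} (hf : ContDiffOn ℝ (⊤ : ℕ∞) f U) :
    ContDiffOn ℝ (⊤ : ℕ∞) (fun x => (f x : ℂ)) U :=
  Complex.ofRealCLM.contDiff.comp_contDiffOn hf

theorem fderiv_ofReal {f : ℝ × ℝ → ℝ} {x : ℝ × ℝ} (hf : DifferentiableAt ℝ f x) (w : ℝ × ℝ) :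
    fderiv ℝ (fun y => (f y : ℂ)) x w = (fderiv ℝ f x w : ℝ) := by
  have := (Complex.ofRealCLM.hasFDerivAt.comp x hf.hasFDerivAt).fderiv
  have h2 : (fun y => (f y : ℂ)) = Complex.ofRealCLM ∘ f := rfl
  rw [h2, this]; simp

theorem sm_symm (hU : IsOpen U) {f : ℝ × ℝ → E} (hf : ContDiffOn ℝ (⊤ : ℕ∞) f U) {x : ℝ × ℝ}
    (hx : x ∈ U) : pd1 (pd2 f) x = pd2 (pd1 f) x := by
  have h1 : DifferentiableAt ℝ (fderiv ℝ f) x :=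
    ((hf.fderiv_of_isOpen hU (m := (⊤ : ℕ∞)) (by simp)).contDiffAt
      (hU.mem_nhds hx)).differentiableAt (by simp)
  have key : ∀ w z : ℝ × ℝ, fderiv ℝ (fun y => fderiv ℝ f y w) x z
      = fderiv ℝ (fderiv ℝ f) x z w := by
    intro w z
    rw [fderiv_clm_apply h1 (differentiableAt_const w)]
    simp
  have hs : IsSymmSndFDerivAt ℝ f x :=
    (hf.contDiffAt (hU.mem_nhds hx)).isSymmSndFDerivAt (by
      simp only [minSmoothness_of_isRCLikeNormedField]
      exact WithTop.coe_le_coe.2 (le_top : (2 : ℕ∞) ≤ ⊤))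
  show fderiv ℝ (fun y => fderiv ℝ f y (0, 1)) x (1, 0)
    = fderiv ℝ (fun y => fderiv ℝ f y (1, 0)) x (0, 1)
  rw [key, key]
  exact hs _ _

/-- covariant derivative in a direction -/
def DD (w : ℝ × ℝ) (A : ℝ × ℝ → ℝ) (f : ℝ × ℝ → ℂ) (x : ℝ × ℝ) : ℂ :=
  fderiv ℝ f x w - Complex.I * (A x) * f x

theorem D1_eq : D1 = DD (1, 0) := rfl
theorem D2_eq : D2 = DD (0, 1) := rfl

theorem DD_congr (hU : IsOpen U) {f g : ℝ × ℝ → ℂ} (h : ∀ y ∈ U, f y = g y) {x : ℝ × ℝ}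
    (hx : x ∈ U) (w : ℝ × ℝ) (A : ℝ × ℝ → ℝ) : DD w A f x = DD w A g x := by
  have : f =ᶠ[nhds x] g := Filter.eventually_of_mem (hU.mem_nhds hx) h
  simp only [DD, this.fderiv_eq, h x hx]

theorem DD_lin {f g : ℝ × ℝ → ℂ} {x : ℝ × ℝ} (hf : DifferentiableAt ℝ f x)
    (hg : DifferentiableAt ℝ g x) (c : ℂ) (w : ℝ × ℝ) (A : ℝ × ℝ → ℝ) :
    DD w A (fun y => f y + c * g y) x = DD w A f x + c * DD w A g x := by
  simp only [DD]
  rw [fderiv_fun_add hf (hg.const_mul c), fderiv_const_mul hg]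
  simp; ring

theorem DD_cmul {g : ℝ × ℝ → ℂ} {x : ℝ × ℝ} 
    (hg : DifferentiableAt ℝ g x) (c : ℂ) (w : ℝ × ℝ) (A : ℝ × ℝ → ℝ) :
    DD w A (fun y => c * g y) x = c * DD w A g x := by
  simp only [DD]
  rw [fderiv_const_mul hg]
  simp; ring

theorem DD_rmul {φ : ℝ × ℝ → ℝ} {g : ℝ × ℝ → ℂ} {x : ℝ × ℝ} (hφ : DifferentiableAt ℝ φ x)
    (hg : DifferentiableAt ℝ g x) (w : ℝ × ℝ) (A : ℝ × ℝ → ℝ) :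
    DD w A (fun y => (φ y : ℂ) * g y) x
      = (fderiv ℝ φ x w : ℝ) * g x + φ x * DD w A g x := by
  have hφ' : DifferentiableAt ℝ (fun y => (φ y : ℂ)) x :=
    Complex.ofRealCLM.differentiableAt.comp x hφ
  simp only [DD]
  rw [fderiv_fun_mul hφ' hg]
  simp only [ContinuousLinearMap.add_apply, ContinuousLinearMap.smul_apply, smul_eq_mul,
    fderiv_ofReal hφ]
  ring

theorem sm_DD (hU : IsOpen U) {A : ℝ × ℝ → ℝ} {f : ℝ × ℝ → ℂ}
    (hA : ContDiffOn ℝ (⊤ : ℕ∞) A U) (hf : ContDiffOn ℝ (⊤ : ℕ∞) f U) (w : ℝ × ℝ) :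
    ContDiffOn ℝ (⊤ : ℕ∞) (DD w A f) U :=
  (sm_dir hU hf w).sub ((contDiffOn_const.mul (sm_ofReal hA)).mul hf)

theorem comm (hU : IsOpen U) {A1 A2 : ℝ × ℝ → ℝ} {f : ℝ × ℝ → ℂ}
    (hA1 : ContDiffOn ℝ (⊤ : ℕ∞) A1 U) (hA2 : ContDiffOn ℝ (⊤ : ℕ∞) A2 U)
    (hf : ContDiffOn ℝ (⊤ : ℕ∞) f U) {x : ℝ × ℝ} (hx : x ∈ U) :
    DD (1, 0) A1 (DD (0, 1) A2 f) x - DD (0, 1) A2 (DD (1, 0) A1 f) x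
      = - Complex.I * (curv A1 A2 x : ℂ) * f x := by
  have df := sm_diff hU hf hx
  have key : ∀ (w z : ℝ × ℝ) (A B : ℝ × ℝ → ℝ), ContDiffOn ℝ (⊤ : ℕ∞) A U →
      DD z B (DD w A f) x = fderiv ℝ (fun y => fderiv ℝ f y w) x z
        - Complex.I * ((fderiv ℝ A x z : ℝ) * f x + A x * fderiv ℝ f x z)
        - Complex.I * B x * (fderiv ℝ f x w - Complex.I * A x * f x) := by
    intro w z A B hA
    have h1 := sm_diff hU (sm_dir hU hf w) hx
    have dA := sm_diff hU hA hx
    have dm : DifferentiableAt ℝ (fun y => (A y : ℂ) * f y) x :=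
      (Complex.ofRealCLM.differentiableAt.comp x dA).mul df
    have e1 : DD w A f = fun y => fderiv ℝ f y w + (-Complex.I) * ((A y : ℂ) * f y) := by
      funext y; simp only [DD]; ring
    rw [e1, DD_lin h1 dm, DD_rmul dA df]
    simp only [DD]; ring
  rw [key _ _ _ _ hA2, key _ _ _ _ hA1]
  have hs : fderiv ℝ (fun y => fderiv ℝ f y (0, 1)) x (1, 0)
    = fderiv ℝ (fun y => fderiv ℝ f y (1, 0)) x (0, 1) := sm_symm hU hf hx
  rw [hs]
  simp only [curv, pd1, pd2]
  push_cast
  ring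

theorem fderiv_h {ε : ℝ} (A : ℝ × ℝ → ℝ) {u : ℝ × ℝ → ℂ} {x : ℝ × ℝ}
    (hu : DifferentiableAt ℝ u x) (w : ℝ × ℝ) :
    DifferentiableAt ℝ (hfun ε u) x ∧
    fderiv ℝ (hfun ε u) x w = -((starRingEnd ℂ) (u x) * DD w A u x).re / ε ^ 2 := by
  have h1 := ((hu.hasFDerivAt.norm_sq.const_sub 1).mul_const ((2 * ε ^ 2)⁻¹))
  have h2 : HasFDerivAt (hfun ε u) _ x := h1
  refine ⟨h2.differentiableAt, ?_⟩
  rw [h2.fderiv]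
  simp [DD, Complex.inner]
  ring

theorem sm_h {ε : ℝ} {u : ℝ × ℝ → ℂ} (hu : ContDiffOn ℝ (⊤ : ℕ∞) u U) :
    ContDiffOn ℝ (⊤ : ℕ∞) (hfun ε u) U :=
  (contDiffOn_const.sub (hu.norm_sq ℝ)).div_const _

end Aux

/-- First Jacobi operator applied to the test pair built from `σ₊` and `φ = (F − h)`
contracted with a constant Killing field (Lemma 4.1(a), flat torus case). -/
theorem J1_on_test_pair
    (ε : ℝ) (hε : 0 < ε) (U : Set (ℝ × ℝ)) (hU : IsOpen U)
    (u : ℝ × ℝ → ℂ) (A1 A2 : ℝ × ℝ → ℝ)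
    (hu : ContDiffOn ℝ (⊤ : ℕ∞) u U) (hA1 : ContDiffOn ℝ (⊤ : ℕ∞) A1 U) (hA2 : ContDiffOn ℝ (⊤ : ℕ∞) A2 U)
    (hYMH : IsYMHOn ε u A1 A2 U)
    (X1 X2 : ℝ)
    (v : ℝ × ℝ → ℂ) (a1 a2 : ℝ × ℝ → ℝ)
    (hv : v = fun y => ((X1 : ℂ) - Complex.I * (X2 : ℂ)) * sigP u A1 A2 y)
    (ha1 : a1 = fun y => (curv A1 A2 y - hfun ε u y) * (-X2))
    (ha2 : a2 = fun y => (curv A1 A2 y - hfun ε u y) * X1) :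
    ∀ x ∈ U,
      J1 ε u A1 A2 v a1 a2 x =
        -2 * (curv A1 A2 x : ℂ) * ((X1 : ℂ) * D1 A1 u x + (X2 : ℂ) * D2 A2 u x)
          + 2 * (hfun ε u x : ℂ) * Complex.I
              * ((X2 : ℂ) * D1 A1 u x - (X1 : ℂ) * D2 A2 u x) := by
  intro x hx
  obtain ⟨e1, e2, e3⟩ := hYMH
  have e2x := e2 x hx
  have e3x := e3 x hx
  simp only [Aux.D1_eq, Aux.D2_eq] at e1 e2x e3x
  have hs1 := Aux.sm_DD hU hA1 hu (1, 0)
  have hs2 := Aux.sm_DD hU hA2 hu (0, 1)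
  have hσ : ContDiffOn ℝ (⊤ : ℕ∞) (sigP u A1 A2) U := hs1.add (contDiffOn_const.mul hs2)
  have hF : ContDiffOn ℝ (⊤ : ℕ∞) (curv A1 A2) U :=
    (Aux.sm_dir hU hA2 (1, 0)).sub (Aux.sm_dir hU hA1 (0, 1))
  have hd1 := Aux.sm_DD hU hA1 hσ (1, 0)
  have hd2 := Aux.sm_DD hU hA2 hσ (0, 1)
  have du := Aux.sm_diff hU hu hx
  have dF := Aux.sm_diff hU hF hx
  have hφ : ContDiffOn ℝ (⊤ : ℕ∞) (fun y => curv A1 A2 y - hfun ε u y) U := hF.sub (Aux.sm_h hu)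
  have dφ := Aux.sm_diff hU hφ hx
  -- first-order identity on U
  have hdσ : ∀ y ∈ U, Aux.DD (1, 0) A1 (sigP u A1 A2) y
      + (-Complex.I) * Aux.DD (0, 1) A2 (sigP u A1 A2) y
      = ((curv A1 A2 y - hfun ε u y : ℝ) : ℂ) * u y := by
    intro y hy
    have hc := Aux.comm hU hA1 hA2 hu hy
    have he := e1 y hy
    have d1 := Aux.sm_diff hU hs1 hy
    have d2 := Aux.sm_diff hU hs2 hy
    have es : sigP u A1 A2 = fun y => Aux.DD (1, 0) A1 u y + Complex.I * Aux.DD (0, 1) A2 u y := rfl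
    rw [es, Aux.DD_lin d1 d2, Aux.DD_lin d1 d2]
    push_cast
    linear_combination (exp := 1) Complex.I * hc - he
      + (-Aux.DD (0, 1) A2 (Aux.DD (0, 1) A2 u) y - (curv A1 A2 y : ℂ) * u y) * Complex.I_mul_I
  have hcσ := Aux.comm hU hA1 hA2 hσ hx
  have dd1 := Aux.sm_diff hU hd1 hx
  have dd2 := Aux.sm_diff hU hd2 hx
  have g1 := Aux.DD_congr hU hdσ hx (1, 0) A1
  have g2 := Aux.DD_congr hU hdσ hx (0, 1) A2
  rw [Aux.DD_lin dd1 dd2, Aux.DD_rmul dφ du] at g1 g2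
  have hh1 := Aux.fderiv_h (ε := ε) A1 du (1, 0)
  have hh2 := Aux.fderiv_h (ε := ε) A2 du (0, 1)
  have dh := hh1.1
  have p1 : fderiv ℝ (fun y => curv A1 A2 y - hfun ε u y) x (1, 0)
      = ((starRingEnd ℂ) (u x) * sigP u A1 A2 x).re / ε ^ 2 := by
    rw [fderiv_fun_sub dF dh, ContinuousLinearMap.sub_apply, hh1.2]
    have : fderiv ℝ (curv A1 A2) x (1, 0)
      = -((starRingEnd ℂ) (u x) * Aux.DD (0, 1) A2 u x).im / ε ^ 2 := by
      rw [← e3x]; field_simp; rfl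
    rw [this]
    simp only [sigP, Aux.D1_eq, Aux.D2_eq]
    simp
    ring
  have p2 : fderiv ℝ (fun y => curv A1 A2 y - hfun ε u y) x (0, 1)
      = ((starRingEnd ℂ) (u x) * sigP u A1 A2 x).im / ε ^ 2 := by
    rw [fderiv_fun_sub dF dh, ContinuousLinearMap.sub_apply, hh2.2]
    have : fderiv ℝ (curv A1 A2) x (0, 1)
      = ((starRingEnd ℂ) (u x) * Aux.DD (1, 0) A1 u x).im / ε ^ 2 := by
      rw [← e2x]; field_simp; rfl
    rw [this]
    simp only [sigP, Aux.D1_eq, Aux.D2_eq]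
    simp
    ring
  have q1 : pd1 a1 x = ((starRingEnd ℂ) (u x) * sigP u A1 A2 x).re / ε ^ 2 * (-X2) := by
    rw [ha1, pd1, fderiv_mul_const dφ, ContinuousLinearMap.smul_apply, p1, smul_eq_mul, mul_comm]
  have q2 : pd2 a2 x = ((starRingEnd ℂ) (u x) * sigP u A1 A2 x).im / ε ^ 2 * X1 := by
    rw [ha2, pd2, fderiv_mul_const dφ, ContinuousLinearMap.smul_apply, p2, smul_eq_mul, mul_comm]
  have r1 : Aux.DD (1, 0) A1 (Aux.DD (1, 0) A1 v) x = ((X1 : ℂ) - Complex.I * (X2 : ℂ)) *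
      Aux.DD (1, 0) A1 (Aux.DD (1, 0) A1 (sigP u A1 A2)) x := by
    rw [← Aux.DD_cmul dd1]
    refine Aux.DD_congr hU (fun y hy => ?_) hx _ _
    rw [hv, Aux.DD_cmul (Aux.sm_diff hU hσ hy)]
  have r2 : Aux.DD (0, 1) A2 (Aux.DD (0, 1) A2 v) x = ((X1 : ℂ) - Complex.I * (X2 : ℂ)) *
      Aux.DD (0, 1) A2 (Aux.DD (0, 1) A2 (sigP u A1 A2)) x := by
    rw [← Aux.DD_cmul dd2]
    refine Aux.DD_congr hU (fun y hy => ?_) hx _ _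
    rw [hv, Aux.DD_cmul (Aux.sm_diff hU hσ hy)]
  have hsx : sigP u A1 A2 x = Aux.DD (1, 0) A1 u x + Complex.I * Aux.DD (0, 1) A2 u x := rfl
  have hlap : Aux.DD (1, 0) A1 (Aux.DD (1, 0) A1 (sigP u A1 A2)) x
      + Aux.DD (0, 1) A2 (Aux.DD (0, 1) A2 (sigP u A1 A2)) x
      = ((fderiv ℝ (fun y => curv A1 A2 y - hfun ε u y) x (1, 0) : ℝ)
          + Complex.I * (fderiv ℝ (fun y => curv A1 A2 y - hfun ε u y) x (0, 1) : ℝ)) * u x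
        + ((curv A1 A2 x - hfun ε u x : ℝ) : ℂ) * sigP u A1 A2 x
        + (curv A1 A2 x : ℂ) * sigP u A1 A2 x := by
    rw [hsx] at hcσ ⊢
    linear_combination (exp := 1) g1 + Complex.I * g2 + Complex.I * hcσ
      + (Aux.DD (0, 1) A2 (Aux.DD (0, 1) A2 (sigP u A1 A2)) x - (curv A1 A2 x : ℂ) *
        (Aux.DD (1, 0) A1 u x + Complex.I * Aux.DD (0, 1) A2 u x)) * Complex.I_mul_I
  have hn : (‖u x‖ ^ 2 - 1) / (2 * ε ^ 2) = - hfun ε u x := by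
    simp only [hfun]; ring
  have hvx : v x = ((X1 : ℂ) - Complex.I * (X2 : ℂ)) * sigP u A1 A2 x := by rw [hv]
  have ha1x : a1 x = (curv A1 A2 x - hfun ε u x) * (-X2) := by rw [ha1]
  have ha2x : a2 x = (curv A1 A2 x - hfun ε u x) * X1 := by rw [ha2]
  rw [p1, p2] at hlap
  simp only [J1, Aux.D1_eq, Aux.D2_eq]
  rw [r1, r2, ← mul_add, hlap, q1, q2, hn, hvx, ha1x, ha2x, hsx]
  generalize Aux.DD (1, 0) A1 u x = P
  generalize Aux.DD (0, 1) A2 u x = Q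
  generalize curv A1 A2 x = F
  generalize hfun ε u x = H
  generalize u x = z
  simp only [div_eq_mul_inv]
  generalize (ε ^ 2)⁻¹ = e
  apply Complex.ext
  · simp
    ring
  · simp
    ring
end
end

section
/- Trace of the second variation over Killing fields (Corollary 4.3, flat torus case): let (u, A) be a periodic configuration solving the YMH equations. Then the sum of the second derivative at t = 0 of t ↦ E_ε(u + t·σ₊, A + t·(0, F − h)) and the second derivative at t = 0 of t ↦ E_ε(u + t·(−i·σ₊), A + t·(h − F, 0)) equals −4·∫_{[0,1]²} (F + h)·|σ₊|². -/
open MeasureTheory Complex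

noncomputable section

def pdd {E : Type*} [NormedAddCommGroup E] [NormedSpace ℝ E] (e : ℝ × ℝ) (f : ℝ × ℝ → E)
    (x : ℝ × ℝ) : E := fderiv ℝ f x e

def DD (e : ℝ × ℝ) (A : ℝ × ℝ → ℝ) (f : ℝ × ℝ → ℂ) (x : ℝ × ℝ) : ℂ :=
  fderiv ℝ f x e - Complex.I * (A x) * f x

abbrev Sm {E : Type*} [NormedAddCommGroup E] [NormedSpace ℝ E] (f : ℝ × ℝ → E) : Prop :=
  ContDiff ℝ (⊤ : ℕ∞) f

lemma Sm.da {E : Type*} [NormedAddCommGroup E] [NormedSpace ℝ E] {f : ℝ × ℝ → E} (hf : Sm f)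
    (x : ℝ × ℝ) : DifferentiableAt ℝ f x := (hf.differentiable (by simp)) x

lemma Sm.pdd {E : Type*} [NormedAddCommGroup E] [NormedSpace ℝ E] {f : ℝ × ℝ → E} (hf : Sm f)
    (e : ℝ × ℝ) : Sm (pdd e f) :=
  (hf.fderiv_right (m := (⊤ : ℕ∞)) (by simp)).clm_apply contDiff_const

lemma Sm.ofReal {f : ℝ × ℝ → ℝ} (hf : Sm f) : Sm (fun x => (f x : ℂ)) :=
  Complex.ofRealCLM.contDiff.comp hf

lemma Sm.conj {f : ℝ × ℝ → ℂ} (hf : Sm f) : Sm (fun x => (starRingEnd ℂ) (f x)) :=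
  Complex.conjCLE.contDiff.comp hf

lemma Sm.re {f : ℝ × ℝ → ℂ} (hf : Sm f) : Sm (fun x => (f x).re) :=
  Complex.reCLM.contDiff.comp hf

lemma Sm.DD {f : ℝ × ℝ → ℂ} {A : ℝ × ℝ → ℝ} (hf : Sm f) (hA : Sm A)
    (e : ℝ × ℝ) : Sm (DD e A f) :=
  (hf.pdd e).sub ((contDiff_const.mul hA.ofReal).mul hf)

lemma Periodic2.pdd {E : Type*} [NormedAddCommGroup E] [NormedSpace ℝ E] {f : ℝ × ℝ → E}
    (hf : Periodic2 f) (e : ℝ × ℝ) : Periodic2 (pdd e f) := by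
  have h1 : (fun x => f (x + (1, 0))) = f := by
    funext x; rw [← (hf x).1]; congr 1; ext <;> simp
  have h2 : (fun x => f (x + (0, 1))) = f := by
    funext x; rw [← (hf x).2]; congr 1; ext <;> simp
  intro x
  constructor
  · have := fderiv_comp_add_right (𝕜 := ℝ) (f := f) (x := x) (1, 0)
    rw [h1] at this
    simp only [_root_.pdd]
    rw [this]
    congr 2
    ext <;> simp
  · have := fderiv_comp_add_right (𝕜 := ℝ) (f := f) (x := x) (0, 1)
    rw [h2] at this
    simp only [_root_.pdd]
    rw [this]
    congr 2
    ext <;> simp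

lemma Periodic2.DD {f : ℝ × ℝ → ℂ} {A : ℝ × ℝ → ℝ}
    (hf : Periodic2 f) (hA : Periodic2 A) (e : ℝ × ℝ) : Periodic2 (DD e A f) := by
  intro x
  have := hf.pdd e x
  simp only [_root_.pdd] at this
  simp only [_root_.DD, (hf x).1, (hf x).2, (hA x).1, (hA x).2, this.1, this.2, and_self]

lemma DD_add_mul {f g : ℝ × ℝ → ℂ} (A : ℝ × ℝ → ℝ) (hf : Sm f) (hg : Sm g) (c : ℂ)
    (e x : ℝ × ℝ) : DD e A (fun y => f y + c * g y) x = DD e A f x + c * DD e A g x := by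
  have h := ((hf.da x).hasFDerivAt.add ((hg.da x).hasFDerivAt.const_mul c)).fderiv
  simp only [DD]
  erw [h]
  simp
  ring

lemma DD_rmul {f : ℝ × ℝ → ℂ} {g : ℝ × ℝ → ℝ} (A : ℝ × ℝ → ℝ) (hf : Sm f) (hg : Sm g)
    (e x : ℝ × ℝ) : DD e A (fun y => (g y : ℂ) * f y) x
      = ((pdd e g x : ℝ) : ℂ) * f x + g x * DD e A f x := by
  have h0 : HasFDerivAt (fun y => (g y : ℂ)) (Complex.ofRealCLM.comp (fderiv ℝ g x)) x :=
    Complex.ofRealCLM.hasFDerivAt.comp x (hg.da x).hasFDerivAt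
  have h := (h0.mul (hf.da x).hasFDerivAt).fderiv
  simp only [DD, pdd]
  erw [h]
  simp
  ring

lemma pdd_inner {f g : ℝ × ℝ → ℂ} (A : ℝ × ℝ → ℝ) (hf : Sm f) (hg : Sm g)
    (e x : ℝ × ℝ) : pdd e (fun y => ((starRingEnd ℂ) (f y) * g y).re) x
      = ((starRingEnd ℂ) (DD e A f x) * g x + (starRingEnd ℂ) (f x) * DD e A g x).re := by
  have h0 : HasFDerivAt (fun y => (starRingEnd ℂ) (f y))
      ((Complex.conjCLE : ℂ →L[ℝ] ℂ).comp (fderiv ℝ f x)) x :=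
    (Complex.conjCLE : ℂ →L[ℝ] ℂ).hasFDerivAt.comp x (hf.da x).hasFDerivAt
  have h1 := h0.mul (hg.da x).hasFDerivAt
  have h2 : HasFDerivAt (fun y => ((starRingEnd ℂ) (f y) * g y).re) _ x :=
    Complex.reCLM.hasFDerivAt.comp x h1
  simp only [pdd, DD]
  rw [h2.fderiv]
  simp
  ring

lemma DD_comm {f : ℝ × ℝ → ℂ} {A B : ℝ × ℝ → ℝ} (hf : Sm f) (hA : Sm A) (hB : Sm B)
    (d e x : ℝ × ℝ) : DD d A (DD e B f) x - DD e B (DD d A f) x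
      = - Complex.I * ((pdd d B x - pdd e A x : ℝ) : ℂ) * f x := by
  have key : ∀ (d e : ℝ × ℝ) (A B : ℝ × ℝ → ℝ), Sm A → Sm B → DD d A (DD e B f) x =
      fderiv ℝ (fderiv ℝ f) x d e - Complex.I * (((pdd d B x : ℝ) : ℂ) * f x + B x * fderiv ℝ f x d)
        - Complex.I * A x * (DD e B f x) := by
    intro d e A B hA hB
    have h0 : HasFDerivAt (fun y => (B y : ℂ)) (Complex.ofRealCLM.comp (fderiv ℝ B x)) x :=
      Complex.ofRealCLM.hasFDerivAt.comp x (hB.da x).hasFDerivAt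
    have hd : DifferentiableAt ℝ (fderiv ℝ f) x :=
      ((hf.fderiv_right (m := (⊤ : ℕ∞)) (by simp)).differentiable (by simp)) x
    have h1 := hd.hasFDerivAt.clm_apply (hasFDerivAt_const e x)
    have h2 := (h1.sub ((h0.const_mul Complex.I).mul (hf.da x).hasFDerivAt)).fderiv
    have h3 : fderiv ℝ (DD e B f) x = _ := h2
    rw [_root_.DD, h3, pdd]
    simp
    ring
  rw [key d e A B hA hB, key e d B A hB hA]
  have hs : fderiv ℝ (fderiv ℝ f) x d e = fderiv ℝ (fderiv ℝ f) x e d :=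
    (hf.contDiffAt.isSymmSndFDerivAt (by simp only [minSmoothness_of_isRCLikeNormedField]; exact WithTop.coe_le_coe.2 (le_top : (2 : ℕ∞) ≤ ⊤))) d e
  rw [hs]
  simp only [DD, pdd]
  push_cast
  ring

lemma div_int {V W : ℝ × ℝ → ℝ} (hV : Sm V) (hW : Sm W) (hVp : Periodic2 V) (hWp : Periodic2 W) :
    ∫ x in Set.Icc (0:ℝ) 1 ×ˢ Set.Icc (0:ℝ) 1, (pdd (1,0) V x + pdd (0,1) W x) = 0 := by
  have hc : Continuous (fun x => pdd (1,0) V x + pdd (0,1) W x) :=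
    (hV.pdd (1,0)).continuous.add (hW.pdd (0,1)).continuous
  have := integral_divergence_prod_Icc_of_hasFDerivAt_of_le V W (fderiv ℝ V) (fderiv ℝ W)
    ((0:ℝ),(0:ℝ)) ((1:ℝ),(1:ℝ)) (by simp) hV.continuous.continuousOn hW.continuous.continuousOn
    (fun x _ => (hV.da x).hasFDerivAt) (fun x _ => (hW.da x).hasFDerivAt)
    (hc.continuousOn.integrableOn_compact isCompact_Icc)
  rw [Set.Icc_prod_Icc]
  refine this.trans ?_
  have e1 : ∀ y, V (1, y) = V (0, y) := fun y => by simpa using (hVp (0, y)).1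
  have e2 : ∀ y, W (y, 1) = W (y, 0) := fun y => by simpa using (hWp (y, 0)).2
  simp [e1, e2]

/-- Quadratic density of the second variation. -/
def QQ (ε : ℝ) (u : ℝ × ℝ → ℂ) (A1 A2 : ℝ × ℝ → ℝ) (v : ℝ × ℝ → ℂ) (a1 a2 : ℝ × ℝ → ℝ)
    (x : ℝ × ℝ) : ℝ :=
  ε ^ 2 * (pdd (1,0) a2 x - pdd (0,1) a1 x) ^ 2
  + (Complex.normSq (DD (1,0) A1 v x - Complex.I * a1 x * u x)
    - 2 * ((starRingEnd ℂ) (DD (1,0) A1 u x) * (Complex.I * a1 x * v x)).re)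
  + (Complex.normSq (DD (0,1) A2 v x - Complex.I * a2 x * u x)
    - 2 * ((starRingEnd ℂ) (DD (0,1) A2 u x) * (Complex.I * a2 x * v x)).re)
  + ((((starRingEnd ℂ) (u x) * v x).re) ^ 2 / ε ^ 2 - hfun ε u x * Complex.normSq (v x))

lemma quart_deriv (c0 c1 c2 c3 c4 : ℝ) :
    iteratedDeriv 2 (fun t : ℝ => c0 + t * c1 + t^2 * c2 + t^3 * c3 + t^4 * c4) 0 = 2 * c2 := by
  have h1 : deriv (fun t : ℝ => c0 + t * c1 + t^2 * c2 + t^3 * c3 + t^4 * c4)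
      = fun t => c1 + t * (2 * c2) + t^2 * (3 * c3) + t^3 * (4 * c4) := by
    funext t
    have := ((((hasDerivAt_const t c0).add ((hasDerivAt_id t).mul_const c1)).add
      ((hasDerivAt_pow 2 t).mul_const c2)).add ((hasDerivAt_pow 3 t).mul_const c3)).add
      ((hasDerivAt_pow 4 t).mul_const c4)
    refine HasDerivAt.deriv (this.congr_deriv ?_)
    norm_num
    ring
  rw [iteratedDeriv_succ, iteratedDeriv_one, h1]
  have := ((((hasDerivAt_const (0:ℝ) c1).add ((hasDerivAt_id (0:ℝ)).mul_const (2*c2))).add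
      ((hasDerivAt_pow 2 (0:ℝ)).mul_const (3*c3))).add ((hasDerivAt_pow 3 (0:ℝ)).mul_const (4*c4)))
  refine HasDerivAt.deriv (this.congr_deriv ?_)
  norm_num

lemma int_quart (c0 c1 c2 c3 c4 : ℝ × ℝ → ℝ) (h0 : Continuous c0) (h1 : Continuous c1)
    (h2 : Continuous c2) (h3 : Continuous c3) (h4 : Continuous c4) :
    iteratedDeriv 2 (fun t : ℝ => ∫ x in Set.Icc (0:ℝ) 1 ×ˢ Set.Icc (0:ℝ) 1,
      (c0 x + t * c1 x + t^2 * c2 x + t^3 * c3 x + t^4 * c4 x)) 0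
      = 2 * ∫ x in Set.Icc (0:ℝ) 1 ×ˢ Set.Icc (0:ℝ) 1, c2 x := by
  have hi : ∀ c : ℝ × ℝ → ℝ, Continuous c →
      Integrable c (volume.restrict (Set.Icc (0:ℝ) 1 ×ˢ Set.Icc (0:ℝ) 1)) := fun c hc =>
    hc.continuousOn.integrableOn_compact (isCompact_Icc.prod isCompact_Icc)
  rw [← quart_deriv (∫ x in Set.Icc (0:ℝ) 1 ×ˢ Set.Icc (0:ℝ) 1, c0 x)
    (∫ x in Set.Icc (0:ℝ) 1 ×ˢ Set.Icc (0:ℝ) 1, c1 x)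
    (∫ x in Set.Icc (0:ℝ) 1 ×ˢ Set.Icc (0:ℝ) 1, c2 x)
    (∫ x in Set.Icc (0:ℝ) 1 ×ˢ Set.Icc (0:ℝ) 1, c3 x)
    (∫ x in Set.Icc (0:ℝ) 1 ×ˢ Set.Icc (0:ℝ) 1, c4 x)]
  congr 1
  funext t
  rw [integral_add (hi _ (by fun_prop)) (hi _ (by fun_prop)),
    integral_add (hi _ (by fun_prop)) (hi _ (by fun_prop)),
    integral_add (hi _ (by fun_prop)) (hi _ (by fun_prop)),
    integral_add (hi _ (by fun_prop)) (hi _ (by fun_prop))]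
  simp only [integral_const_mul]

lemma c1_cont (ε : ℝ) {f1 f2 a1 a2 : ℝ × ℝ → ℝ} {u v P1 P2 Q1 Q2 : ℝ × ℝ → ℂ}
    (h : Continuous a1) (h' : Continuous a2) (hu : Continuous u) (hv : Continuous v)
    (h1 : Continuous P1) (h2 : Continuous P2) (h3 : Continuous Q1) (h4 : Continuous Q2)
    (h5 : Continuous f1) (h6 : Continuous f2) : Continuous fun x => 2 * ε ^ 2 * f1 x * f2 x
      + 2 * ((starRingEnd ℂ) (P1 x) * (Q1 x - Complex.I * a1 x * u x)).re
      + 2 * ((starRingEnd ℂ) (P2 x) * (Q2 x - Complex.I * a2 x * u x)).re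
      - (1 - Complex.normSq (u x)) * ((starRingEnd ℂ) (u x) * v x).re / ε^2 := by fun_prop

lemma c2_cont (ε : ℝ) {f a1 a2 : ℝ × ℝ → ℝ} {u v P1 P2 Q1 Q2 : ℝ × ℝ → ℂ}
    (h : Continuous a1) (h' : Continuous a2) (hu : Continuous u) (hv : Continuous v)
    (h1 : Continuous P1) (h2 : Continuous P2) (h3 : Continuous Q1) (h4 : Continuous Q2)
    (h5 : Continuous f) : Continuous fun x => ε ^ 2 * (f x) ^ 2
      + (Complex.normSq (Q1 x - Complex.I * a1 x * u x)
        - 2 * ((starRingEnd ℂ) (P1 x) * (Complex.I * a1 x * v x)).re)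
      + (Complex.normSq (Q2 x - Complex.I * a2 x * u x)
        - 2 * ((starRingEnd ℂ) (P2 x) * (Complex.I * a2 x * v x)).re)
      + ((((starRingEnd ℂ) (u x) * v x).re) ^ 2 / ε ^ 2
        - (1 - ‖u x‖ ^ 2) / (2 * ε ^ 2) * Complex.normSq (v x)) := by fun_prop

lemma c3_cont (ε : ℝ) {a1 a2 : ℝ × ℝ → ℝ} {u v Q1 Q2 : ℝ × ℝ → ℂ}
    (h : Continuous a1) (h' : Continuous a2) (hu : Continuous u) (hv : Continuous v)
    (h3 : Continuous Q1) (h4 : Continuous Q2) : Continuous fun x =>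
      - 2 * ((starRingEnd ℂ) (Q1 x - Complex.I * a1 x * u x)
          * (Complex.I * a1 x * v x)).re
      - 2 * ((starRingEnd ℂ) (Q2 x - Complex.I * a2 x * u x)
          * (Complex.I * a2 x * v x)).re
      + ((starRingEnd ℂ) (u x) * v x).re * Complex.normSq (v x) / ε^2 := by fun_prop

lemma second_var (ε : ℝ) (hε : 0 < ε) {u v : ℝ × ℝ → ℂ} {A1 A2 a1 a2 : ℝ × ℝ → ℝ}
    (hu : Sm u) (hv : Sm v) (hA1 : Sm A1) (hA2 : Sm A2) (ha1 : Sm a1) (ha2 : Sm a2) :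
    iteratedDeriv 2 (fun t : ℝ =>
      energy ε (fun x => u x + t • v x)
        (fun x => A1 x + t * a1 x) (fun x => A2 x + t * a2 x)) 0
    = 2 * ∫ x in Set.Icc (0:ℝ) 1 ×ˢ Set.Icc (0:ℝ) 1, QQ ε u A1 A2 v a1 a2 x := by
  have cu := hu.continuous
  have cv := hv.continuous
  have ca1 := ha1.continuous
  have ca2 := ha2.continuous
  have cP1 := (hu.DD hA1 (1,0)).continuous
  have cP2 := (hu.DD hA2 (0,1)).continuous
  have cR1 := (hv.DD hA1 (1,0)).continuous
  have cR2 := (hv.DD hA2 (0,1)).continuous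
  have cF1 := (hA2.pdd (1,0)).continuous
  have cF2 := (hA1.pdd (0,1)).continuous
  have cf1 := (ha2.pdd (1,0)).continuous
  have cf2 := (ha1.pdd (0,1)).continuous
  have cn : Continuous Complex.normSq := Complex.continuous_normSq
  rw [← int_quart
    (fun x => ε^2 * (pdd (1,0) A2 x - pdd (0,1) A1 x)^2 + Complex.normSq (DD (1,0) A1 u x)
      + Complex.normSq (DD (0,1) A2 u x) + (1 - Complex.normSq (u x))^2 / (4 * ε^2))
    (fun x => 2 * ε^2 * (pdd (1,0) A2 x - pdd (0,1) A1 x) * (pdd (1,0) a2 x - pdd (0,1) a1 x)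
      + 2 * ((starRingEnd ℂ) (DD (1,0) A1 u x) * (DD (1,0) A1 v x - Complex.I * a1 x * u x)).re
      + 2 * ((starRingEnd ℂ) (DD (0,1) A2 u x) * (DD (0,1) A2 v x - Complex.I * a2 x * u x)).re
      - (1 - Complex.normSq (u x)) * ((starRingEnd ℂ) (u x) * v x).re / ε^2)
    (QQ ε u A1 A2 v a1 a2)
    (fun x => - 2 * ((starRingEnd ℂ) (DD (1,0) A1 v x - Complex.I * a1 x * u x)
          * (Complex.I * a1 x * v x)).re
      - 2 * ((starRingEnd ℂ) (DD (0,1) A2 v x - Complex.I * a2 x * u x)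
          * (Complex.I * a2 x * v x)).re
      + ((starRingEnd ℂ) (u x) * v x).re * Complex.normSq (v x) / ε^2)
    (fun x => (a1 x)^2 * Complex.normSq (v x) + (a2 x)^2 * Complex.normSq (v x)
      + Complex.normSq (v x) ^ 2 / (4 * ε^2))
    (by fun_prop) (c1_cont ε ca1 ca2 cu cv cP1 cP2 cR1 cR2 (cF1.sub cF2) (cf1.sub cf2))
    (c2_cont ε ca1 ca2 cu cv cP1 cP2 cR1 cR2 (cf1.sub cf2))
    (c3_cont ε ca1 ca2 cu cv cR1 cR2) (by fun_prop)]
  congr 1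
  funext t
  unfold energy
  congr 1
  funext x
  have e1 : ∀ e, fderiv ℝ (fun x => u x + t • v x) x e = fderiv ℝ u x e + t * fderiv ℝ v x e := by
    intro e
    have h := ((hu.da x).hasFDerivAt.add ((hv.da x).hasFDerivAt.const_smul t)).fderiv
    erw [h]
    simp
  have e2 : ∀ e, ∀ A a : ℝ × ℝ → ℝ, Sm A → Sm a →
      fderiv ℝ (fun x => A x + t * a x) x e = fderiv ℝ A x e + t * fderiv ℝ a x e := by
    intro e A a hA ha
    have h := ((hA.da x).hasFDerivAt.add ((ha.da x).hasFDerivAt.const_mul t)).fderiv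
    erw [h]
    simp
  simp only [curv, D1, D2, pd1, pd2, e1, e2 _ _ _ hA1 ha1, e2 _ _ _ hA2 ha2, QQ, DD, pdd, hfun,
    ← Complex.normSq_eq_norm_sq]
  simp only [Complex.normSq_apply, Complex.add_re, Complex.add_im, Complex.sub_re, Complex.sub_im,
    Complex.mul_re, Complex.mul_im, Complex.I_re, Complex.I_im, Complex.ofReal_re,
    Complex.ofReal_im, Complex.conj_re, Complex.conj_im, Complex.real_smul, Complex.ofReal_add,
    Complex.ofReal_mul]
  field_simp
  ring

/-- Trace of the second variation over the constant Killing fields of the flat torus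
(Corollary 4.3, flat torus case). -/
theorem trace_second_variation
    (ε : ℝ) (hε : 0 < ε) (u : ℝ × ℝ → ℂ) (A1 A2 : ℝ × ℝ → ℝ)
    (hu : ContDiff ℝ (⊤ : ℕ∞) u) (hup : Periodic2 u)
    (hA1 : ContDiff ℝ (⊤ : ℕ∞) A1) (hA1p : Periodic2 A1)
    (hA2 : ContDiff ℝ (⊤ : ℕ∞) A2) (hA2p : Periodic2 A2)
    (hYMH : IsYMH ε u A1 A2) :
    iteratedDeriv 2 (fun t : ℝ =>
        energy ε (fun x => u x + t • sigP u A1 A2 x)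
          (fun x => A1 x + t * 0)
          (fun x => A2 x + t * (curv A1 A2 x - hfun ε u x))) 0
      + iteratedDeriv 2 (fun t : ℝ =>
          energy ε (fun x => u x + t • (-(Complex.I) * sigP u A1 A2 x))
            (fun x => A1 x + t * (hfun ε u x - curv A1 A2 x))
            (fun x => A2 x + t * 0)) 0 =
      -4 * ∫ x in Set.Icc (0:ℝ) 1 ×ˢ Set.Icc (0:ℝ) 1,
        (curv A1 A2 x + hfun ε u x) * ‖sigP u A1 A2 x‖ ^ 2 := by
  obtain ⟨E1, E2, E3⟩ := hYMH
  replace hu : Sm u := hu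
  replace hA1 : Sm A1 := hA1
  replace hA2 : Sm A2 := hA2
  set σ := sigP u A1 A2 with hσ
  have hD1 : Sm (D1 A1 u) := hu.DD hA1 (1,0)
  have hD2 : Sm (D2 A2 u) := hu.DD hA2 (0,1)
  have pD1 : Periodic2 (D1 A1 u) := hup.DD hA1p (1,0)
  have pD2 : Periodic2 (D2 A2 u) := hup.DD hA2p (0,1)
  have sσ : Sm σ := hD1.add (contDiff_const.mul hD2)
  have pσ : Periodic2 σ := by
    intro x
    simp only [hσ, sigP, (pD1 x).1, (pD1 x).2, (pD2 x).1, (pD2 x).2, and_self]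
  have sF : Sm (curv A1 A2) := (hA2.pdd (1,0)).sub (hA1.pdd (0,1))
  have sh : Sm (hfun ε u) := (contDiff_const.sub (hu.norm_sq ℝ)).div_const _
  set g : ℝ × ℝ → ℝ := fun x => curv A1 A2 x - hfun ε u x with hg
  have sg : Sm g := sF.sub sh
  have ng : (fun x => hfun ε u x - curv A1 A2 x) = fun x => - g x := by
    funext x; simp [hg]
  have hσ' : ∀ x, σ x = DD (1,0) A1 u x + I * DD (0,1) A2 u x := fun x => rfl
  -- first-order equation
  have K1 : ∀ x, DD (1,0) A1 σ x - I * DD (0,1) A2 σ x = g x * u x := by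
    intro x
    have a := DD_add_mul A1 hD1 hD2 I (1,0) x
    have b := DD_add_mul A2 hD1 hD2 I (0,1) x
    have c := DD_comm hu hA1 hA2 (1,0) (0,1) x
    have d : -(DD (1,0) A1 (D1 A1 u) x + DD (0,1) A2 (D2 A2 u) x) = (hfun ε u x : ℂ) * u x := E1 x
    have c' : DD (1,0) A1 (D2 A2 u) x - DD (0,1) A2 (D1 A1 u) x
      = - Complex.I * ((curv A1 A2 x : ℝ) : ℂ) * u x := c
    have a' : DD (1,0) A1 σ x = _ := a
    have b' : DD (0,1) A2 σ x = _ := b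
    rw [a', b']
    simp only [hg]
    push_cast
    linear_combination (-1) * d + I * c' + (-(DD (0,1) A2 (D2 A2 u) x) - (curv A1 A2 x : ℂ) * u x) * Complex.I_sq
  have dh : ∀ e A x, pdd e (hfun ε u) x = - ((starRingEnd ℂ) (u x) * DD e A u x).re / ε^2 := by
    intro e A x
    have h0 : hfun ε u = fun x => (1 - ((starRingEnd ℂ) (u x) * u x).re) / (2 * ε^2) := by
      funext y
      simp [hfun, ← Complex.normSq_eq_norm_sq, Complex.normSq_apply]
    have h1 := pdd_inner A hu hu e x
    have s1 : Sm (fun y => ((starRingEnd ℂ) (u y) * u y).re) := Sm.re (hu.conj.mul hu)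
    have h2 := (((s1.da x).hasFDerivAt.const_sub 1).mul_const ((2 * ε^2)⁻¹)).fderiv
    have h3 : fderiv ℝ (hfun ε u) x = (2 * ε ^ 2)⁻¹ • -fderiv ℝ (fun y => ((starRingEnd ℂ) (u y) * u y).re) x := by
      rw [h0]; simp only [div_eq_mul_inv]; exact h2
    simp only [pdd] at h1 ⊢
    rw [h3]
    simp only [smul_neg, ContinuousLinearMap.neg_apply, ContinuousLinearMap.smul_apply, h1]
    simp
    field_simp
    ring
  have dg : ∀ e x, pdd e g x = pdd e (curv A1 A2) x - pdd e (hfun ε u) x := by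
    intro e x
    have h : fderiv ℝ g x = _ := ((sF.da x).hasFDerivAt.sub (sh.da x).hasFDerivAt).fderiv
    simp only [pdd]
    rw [h]; rfl
  have G1 : ∀ x, pdd (1,0) g x = ((starRingEnd ℂ) (u x) * σ x).re / ε^2 := by
    intro x
    rw [dg, dh _ A1]
    have h : ε ^ 2 * pdd (1,0) (curv A1 A2) x = -((starRingEnd ℂ) (u x) * DD (0,1) A2 u x).im := E3 x
    rw [eq_div_iff (by positivity), sub_mul, mul_comm _ (ε^2), h, hσ' x,
      div_mul_cancel₀ _ (by positivity), mul_add, Complex.add_re]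
    simp only [Complex.mul_re, Complex.mul_im, Complex.I_re, Complex.I_im]
    ring
  have G2 : ∀ x, pdd (0,1) g x = ((starRingEnd ℂ) (u x) * σ x).im / ε^2 := by
    intro x
    rw [dg, dh _ A2]
    have h : ε ^ 2 * pdd (0,1) (curv A1 A2) x = ((starRingEnd ℂ) (u x) * DD (1,0) A1 u x).im := E2 x
    rw [eq_div_iff (by positivity), sub_mul, mul_comm _ (ε^2), h, hσ' x,
      div_mul_cancel₀ _ (by positivity), mul_add, Complex.add_im]
    simp only [Complex.mul_re, Complex.mul_im, Complex.I_re, Complex.I_im]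
    ring
  have s1 := sσ.DD hA1 (1,0)
  have s2 := sσ.DD hA2 (0,1)
  have p1 := pσ.DD hA1p (1,0)
  have p2 := pσ.DD hA2p (0,1)
  -- Weitzenboeck
  have K2 : ∀ x, DD (1,0) A1 (DD (1,0) A1 σ) x + DD (0,1) A2 (DD (0,1) A2 σ) x
      = ((2 * curv A1 A2 x - hfun ε u x + Complex.normSq (u x) / ε^2 : ℝ) : ℂ) * σ x := by
    intro x
    have e0 : (fun x => DD (1,0) A1 σ x + (-I) * DD (0,1) A2 σ x) = fun x => (g x : ℂ) * u x := by
      funext y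
      rw [← K1 y]; ring
    have a := DD_add_mul A1 s1 s2 (-I) (1,0) x
    have b := DD_add_mul A2 s1 s2 (-I) (0,1) x
    have c : _ = - Complex.I * ((curv A1 A2 x : ℝ) : ℂ) * σ x := DD_comm sσ hA1 hA2 (1,0) (0,1) x
    rw [e0, DD_rmul A1 hu sg] at a
    rw [e0, DD_rmul A2 hu sg] at b
    have gg : ((pdd (1,0) g x : ℝ) : ℂ) + I * ((pdd (0,1) g x : ℝ) : ℂ) = (starRingEnd ℂ) (u x) * σ x / ε^2 := by
      rw [G1, G2]
      conv_rhs => rw [← Complex.re_add_im ((starRingEnd ℂ) (u x) * σ x)]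
      push_cast
      ring
    have nn : ((Complex.normSq (u x) : ℝ) : ℂ) = (starRingEnd ℂ) (u x) * u x :=
      Complex.normSq_eq_conj_mul_self
    have gd : (g x : ℂ) = curv A1 A2 x - hfun ε u x := by simp [hg]
    push_cast
    rw [nn]
    have sx := hσ' x
    linear_combination (-1) * a - I * b + I * c + u x * gg - (g x : ℂ) * sx + σ x * gd + (DD (0,1) A2 (DD (0,1) A2 σ) x - (curv A1 A2 x : ℂ) * σ x) * Complex.I_sq
  have perV : ∀ f : ℝ × ℝ → ℂ, Periodic2 f →
      Periodic2 (fun y => ((starRingEnd ℂ) (σ y) * f y).re) := by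
    intro f hf x
    simp only [(hf x).1, (hf x).2, (pσ x).1, (pσ x).2, and_self]
  have DI := div_int (Sm.re (sσ.conj.mul s1)) (Sm.re (sσ.conj.mul s2)) (perV _ p1) (perV _ p2)
  have V1 := second_var ε hε hu sσ hA1 hA2 (contDiff_const (c := (0:ℝ))) sg
  have V2 := second_var ε hε hu (contDiff_const.mul sσ : Sm (fun x => -I * σ x)) hA1 hA2
    (a1 := fun x => hfun ε u x - curv A1 A2 x) (sh.sub sF)
    (contDiff_const (c := (0:ℝ)))
  refine (congrArg₂ (· + ·) V1 V2).trans ?_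
  have ci : ∀ c : ℝ × ℝ → ℝ, Continuous c →
      Integrable c (volume.restrict (Set.Icc (0:ℝ) 1 ×ˢ Set.Icc (0:ℝ) 1)) := fun c hc =>
    hc.continuousOn.integrableOn_compact (isCompact_Icc.prod isCompact_Icc)
  have QC : ∀ (v : ℝ × ℝ → ℂ) (a1 a2 : ℝ × ℝ → ℝ), Sm v → Sm a1 → Sm a2 →
      Continuous (QQ ε u A1 A2 v a1 a2) := by
    intro v a1 a2 hv ha1 ha2
    have cu := hu.continuous
    have cv := hv.continuous
    have ca1 := ha1.continuous
    have ca2 := ha2.continuous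
    have cP1 := (hu.DD hA1 (1,0)).continuous
    have cP2 := (hu.DD hA2 (0,1)).continuous
    have cR1 := (hv.DD hA1 (1,0)).continuous
    have cR2 := (hv.DD hA2 (0,1)).continuous
    have cf1 := (ha2.pdd (1,0)).continuous
    have cf2 := (ha1.pdd (0,1)).continuous
    have cn : Continuous Complex.normSq := Complex.continuous_normSq
    exact c2_cont ε ca1 ca2 cu cv cP1 cP2 cR1 cR2 (cf1.sub cf2)
  have R : ∀ x, QQ ε u A1 A2 σ (fun _ => 0) g x
        + QQ ε u A1 A2 (fun x => -I * σ x) (fun x => hfun ε u x - curv A1 A2 x) (fun _ => 0) x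
      = 2 * (pdd (1,0) (fun y => ((starRingEnd ℂ) (σ y) * DD (1,0) A1 σ y).re) x
        + pdd (0,1) (fun y => ((starRingEnd ℂ) (σ y) * DD (0,1) A2 σ y).re) x)
        + (-2) * ((curv A1 A2 x + hfun ε u x) * ‖σ x‖^2) := by
    intro x
    have k2 := K2 x
    rw [pdd_inner A1 sσ s1, pdd_inner A2 sσ s2]
    have m1 : ∀ e A, DD e A (fun x => -I * σ x) x = -I * DD e A σ x := by
      intro e A
      have h := ((sσ.da x).hasFDerivAt.const_mul (-I)).fderiv
      simp only [DD]
      erw [h]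
      simp
      ring
    have z : ∀ e, pdd e (fun _ => (0:ℝ)) x = 0 := by intro e; simp [pdd]
    have ngd : pdd (0,1) (fun x => hfun ε u x - curv A1 A2 x) x = - pdd (0,1) g x := by
      rw [ng]; simp [pdd]
    have k1 := K1 x
    have sx := hσ' x
    have gd : hfun ε u x - curv A1 A2 x = - g x := by simp [hg]
    have gd' : hfun ε u x = curv A1 A2 x - g x := by simp [hg]
    unfold QQ
    beta_reduce
    rw [ngd, m1, m1, z, z, G1, G2, gd]
    rw [← Complex.normSq_eq_norm_sq]
    generalize DD (1,0) A1 (DD (1,0) A1 σ) x = s11 at *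
    generalize DD (0,1) A2 (DD (0,1) A2 σ) x = s22 at *
    have i1 : DD (1,0) A1 σ x = g x * u x + I * DD (0,1) A2 σ x := by rw [← k1]; ring
    have i2 : s11 = ((2 * curv A1 A2 x - hfun ε u x + Complex.normSq (u x) / ε^2 : ℝ) : ℂ) * σ x - s22 := by
      rw [← k2]; ring
    have i3 : DD (1,0) A1 u x = σ x - I * DD (0,1) A2 u x := by rw [sx]; ring
    rw [i1, i2, i3, gd']
    generalize DD (0,1) A2 u x = q
    generalize DD (0,1) A2 σ x = p
    generalize σ x = s
    generalize u x = w
    generalize g x = γ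
    generalize curv A1 A2 x = φ
    simp only [Complex.normSq_apply, Complex.add_re, Complex.add_im, Complex.sub_re, Complex.sub_im,
      Complex.mul_re, Complex.mul_im, Complex.I_re, Complex.I_im, Complex.ofReal_re,
      Complex.ofReal_im, Complex.conj_re, Complex.conj_im, Complex.neg_re, Complex.neg_im,
      Complex.ofReal_neg, Complex.ofReal_zero, Complex.zero_re, Complex.zero_im]
    field_simp
    ring
  have S := integral_add (ci _ (QC _ _ _ sσ (contDiff_const (c := (0:ℝ))) sg))
    (ci _ (QC _ _ _ (contDiff_const.mul sσ : Sm (fun x => -I * σ x))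
      (sh.sub sF : Sm (fun x => hfun ε u x - curv A1 A2 x)) (contDiff_const (c := (0:ℝ)))))
  simp only [R] at S
  have cd : Continuous (fun x => pdd (1,0) (fun y => ((starRingEnd ℂ) (σ y) * DD (1,0) A1 σ y).re) x
        + pdd (0,1) (fun y => ((starRingEnd ℂ) (σ y) * DD (0,1) A2 σ y).re) x) := ((Sm.re (sσ.conj.mul s1)).pdd (1,0)).continuous.add
    ((Sm.re (sσ.conj.mul s2)).pdd (0,1)).continuous
  have cz : Continuous (fun x => (curv A1 A2 x + hfun ε u x) * ‖σ x‖^2) :=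
    (sF.continuous.add sh.continuous).mul (sσ.continuous.norm.pow 2)
  rw [integral_add ((ci _ cd).const_mul 2) ((ci _ cz).const_mul (-2)), integral_const_mul,
    integral_const_mul] at S
  erw [DI] at S
  linarith
end
end
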